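/- Let d ∈ {xd, cd}, let 𝒞1 and 𝒞2 be non-empty classes of frames closed under disjoint unions, and let L_i be a one-variable modal logic (in disjoint modal signatures) d-complete for 𝒞_i (i = 1,2). If L1 and L2 are both decidable, then the fusion L1 ⊗ L2 is decidable. -/

import Mathlib

namespace OneVarML

/-- One-variable first-order modal formulas over modal signature `M`:
atoms `P n` stand for `Pₙ(x)`, `ex φ` stands for `∃x φ`. -/
inductive OV (M : Type) : Type
  | atom : ℕ → OV M
  | neg  : OV M → OV M
  | and  : OV M → OV M → OV M
  | ex   : OV M → OV M
  | box  : M → OV M → OV M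
  deriving DecidableEq

namespace OV

variable {M M' : Type}

/-- implication, defined from `¬`, `∧` -/
def imp (φ ψ : OV M) : OV M := .neg (.and φ (.neg ψ))

/-- disjunction -/
def or (φ ψ : OV M) : OV M := .neg (.and (.neg φ) (.neg ψ))

/-- universal quantifier `∀x φ := ¬∃x¬φ` -/
def all (φ : OV M) : OV M := .neg (.ex (.neg φ))

/-- renaming of modal operators -/
def mapOp (f : M → M') : OV M → OV M'
  | atom n => atom n
  | neg φ => neg (mapOp f φ)
  | and φ ψ => and (mapOp f φ) (mapOp f ψ)
  | ex φ => ex (mapOp f φ)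
  | box m φ => box (f m) (mapOp f φ)

/-- uniform substitution of one-variable formulas for the atoms `Pₙ(x)` -/
def subst (σ : ℕ → OV M) : OV M → OV M
  | atom n => σ n
  | neg φ => neg (subst σ φ)
  | and φ ψ => and (subst σ φ) (subst σ ψ)
  | ex φ => ex (subst σ φ)
  | box m φ => box m (subst σ φ)

/-- formulas without modal operators -/
def boxFree : OV M → Prop
  | atom _ => True
  | neg φ => boxFree φ
  | and φ ψ => boxFree φ ∧ boxFree ψ
  | ex φ => boxFree φ
  | box _ _ => False

/-- classical evaluation of a (box-free) one-variable formula in a classical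
first-order structure with domain `D`, interpretation `I`, at element `a` -/
def clEval (D : Type) (I : ℕ → Set D) : OV M → D → Prop
  | atom n, a => a ∈ I n
  | neg φ, a => ¬ clEval D I φ a
  | and φ ψ, a => clEval D I φ a ∧ clEval D I ψ a
  | ex φ, _ => ∃ b : D, clEval D I φ b
  | box _ _, _ => True

end OV

/-- the one-variable fragment of classical first-order logic: box-free
formulas valid in all classical structures -/
def FOone (M : Type) : Set (OV M) :=
  {φ | φ.boxFree ∧ ∀ (D : Type) (I : ℕ → Set D) (a : D), OV.clEval D I φ a}

/-- A one-variable `M`-logic: includes one-variable classical FO and the K-axioms,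
closed under Modus Ponens, Generalisation, Necessitation and Substitution. -/
structure IsOVLogic {M : Type} (L : Set (OV M)) : Prop where
  fo : FOone M ⊆ L
  kax : ∀ (m : M) (n k : ℕ),
    OV.imp (.box m (OV.imp (.atom n) (.atom k)))
      (OV.imp (.box m (.atom n)) (.box m (.atom k))) ∈ L
  mp : ∀ φ ψ, OV.imp φ ψ ∈ L → φ ∈ L → ψ ∈ L
  gen : ∀ φ, φ ∈ L → OV.all φ ∈ L
  nec : ∀ m φ, φ ∈ L → OV.box m φ ∈ L
  subst : ∀ (σ : ℕ → OV M) φ, φ ∈ L → OV.subst σ φ ∈ L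

/-- A Kripke `M`-frame. -/
structure KFrame (M : Type) where
  W : Type
  ne : Nonempty W
  R : M → W → W → Prop

/-- the two domain semantics: expanding (`xd`) and constant (`cd`) domains -/
inductive DSem : Type
  | xd | cd
  deriving DecidableEq

/-- A Kripke model (with expanding domains) based on a frame `F`:
a family of classical structures over subsets of one big domain `D`,
expanding along all accessibility relations. -/
structure KModel {M : Type} (F : KFrame M) where
  D : Type
  dom : F.W → Set D
  domNe : ∀ w, (dom w).Nonempty
  expand : ∀ (m : M) (w v : F.W), F.R m w v → dom w ⊆ dom v
  I : F.W → ℕ → Set D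

namespace KModel

variable {M : Type} {F : KFrame M}

/-- a `d`-model: for `cd`, all the domains coincide (with the common domain) -/
def IsD (𝔪 : KModel F) (d : DSem) : Prop :=
  d = DSem.cd → ∀ w, 𝔪.dom w = Set.univ

/-- truth of a formula at a world under an assignment (value of `x`) -/
def eval (𝔪 : KModel F) : OV M → F.W → 𝔪.D → Prop
  | .atom n, w, a => a ∈ 𝔪.I w n
  | .neg φ, w, a => ¬ 𝔪.eval φ w a
  | .and φ ψ, w, a => 𝔪.eval φ w a ∧ 𝔪.eval ψ w a
  | .ex φ, w, _ => ∃ b ∈ 𝔪.dom w, 𝔪.eval φ w b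
  | .box m φ, w, a => ∀ v, F.R m w v → 𝔪.eval φ v a

/-- `φ` is true at `w` if it holds under every assignment into the domain of `w` -/
def TrueAt (𝔪 : KModel F) (φ : OV M) (w : F.W) : Prop :=
  ∀ a ∈ 𝔪.dom w, 𝔪.eval φ w a

/-- `φ` is true in the model if it is true at every world -/
def TrueIn (𝔪 : KModel F) (φ : OV M) : Prop := ∀ w, 𝔪.TrueAt φ w

/-- a finite model: finitely many worlds, all domains finite -/
def FiniteM (𝔪 : KModel F) : Prop := Finite F.W ∧ ∀ w, (𝔪.dom w).Finite

end KModel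

/-- `Log_d 𝒞`: the formulas true in every `d`-model based on a frame from `𝒞` -/
def LogD {M : Type} (d : DSem) (C : Set (KFrame M)) : Set (OV M) :=
  {φ | ∀ F ∈ C, ∀ 𝔪 : KModel F, 𝔪.IsD d → 𝔪.TrueIn φ}

/-- disjoint union of a family of frames -/
def KFrame.disjUnion {M ι : Type} (hι : Nonempty ι) (Fs : ι → KFrame M) : KFrame M where
  W := Σ i, (Fs i).W
  ne := ⟨⟨Classical.choice hι, Classical.choice (Fs (Classical.choice hι)).ne⟩⟩
  R := fun m a b => ∃ (i : ι) (w v : (Fs i).W), (Fs i).R m w v ∧ a = ⟨i, w⟩ ∧ b = ⟨i, v⟩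

/-- a class of frames closed under (arbitrary) disjoint unions -/
def ClosedDU {M : Type} (C : Set (KFrame M)) : Prop :=
  ∀ (ι : Type) (hι : Nonempty ι) (Fs : ι → KFrame M),
    (∀ i, Fs i ∈ C) → KFrame.disjUnion hι Fs ∈ C

/-- reduct of a frame along a map of modal signatures -/
def KFrame.reduct {M M' : Type} (f : M' → M) (F : KFrame M) : KFrame M' :=
  ⟨F.W, F.ne, fun m => F.R (f m)⟩

/-- fusion `𝒞1 ⊗ 𝒞2` of classes of frames: the frames over a common set of worlds
whose `M1`-reduct is in `𝒞1` and whose `M2`-reduct is in `𝒞2` -/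
def frameFusion {M1 M2 : Type} (C1 : Set (KFrame M1)) (C2 : Set (KFrame M2)) :
    Set (KFrame (M1 ⊕ M2)) :=
  {F | F.reduct Sum.inl ∈ C1 ∧ F.reduct Sum.inr ∈ C2}

/-- fusion `L1 ⊗ L2` of one-variable logics: the smallest one-variable
`(M1 ⊕ M2)`-logic containing (the copies of) `L1` and `L2` -/
def fusion {M1 M2 : Type} (L1 : Set (OV M1)) (L2 : Set (OV M2)) : Set (OV (M1 ⊕ M2)) :=
  ⋂₀ {L | IsOVLogic L ∧ OV.mapOp Sum.inl '' L1 ⊆ L ∧ OV.mapOp Sum.inr '' L2 ⊆ L}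

/-- local derivability from a logic: closure under Modus Ponens and Generalisation -/
inductive Deriv {M : Type} (L : Set (OV M)) : OV M → Prop
  | ax {φ} : φ ∈ L → Deriv L φ
  | mp {φ ψ} : Deriv L (OV.imp φ ψ) → Deriv L φ → Deriv L ψ
  | gen {φ} : Deriv L φ → Deriv L (OV.all φ)

/-- global consequence `φ ⊢*_L ψ`: `ψ` is in the smallest set including `L ∪ {φ}`
closed under Modus Ponens, Generalisation and Necessitation -/
inductive GlobalConseq {M : Type} (L : Set (OV M)) (φ : OV M) : OV M → Prop
  | ax {ψ} : ψ ∈ L → GlobalConseq L φ ψ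
  | prem : GlobalConseq L φ φ
  | mp {ψ χ} : GlobalConseq L φ (OV.imp ψ χ) → GlobalConseq L φ ψ → GlobalConseq L φ χ
  | gen {ψ} : GlobalConseq L φ ψ → GlobalConseq L φ (OV.all ψ)
  | nec (m : M) {ψ} : GlobalConseq L φ ψ → GlobalConseq L φ (OV.box m ψ)

/-- `L` is `d`-complete for `𝒞` -/
def DComplete {M : Type} (d : DSem) (L : Set (OV M)) (C : Set (KFrame M)) : Prop :=
  L = LogD d C

/-- `L` is globally `d`-complete for `𝒞` -/
def GloballyDComplete {M : Type} (d : DSem) (L : Set (OV M)) (C : Set (KFrame M)) : Prop :=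
  ∀ φ ψ, GlobalConseq L φ ψ ↔
    ∀ F ∈ C, ∀ 𝔪 : KModel F, 𝔪.IsD d → 𝔪.TrueIn φ → 𝔪.TrueIn ψ

/-- a non-trivial frame: some `R_□` relates two distinct worlds -/
def KFrame.Nontrivial {M : Type} (F : KFrame M) : Prop :=
  ∃ (m : M) (w v : F.W), w ≠ v ∧ F.R m w v

/-- the fixed Gödel numbering of one-variable formulas (relative to a numbering
`eM` of modal operators) -/
def OV.encode {M : Type} (eM : M → ℕ) : OV M → ℕ
  | .atom n => Nat.pair 0 n
  | .neg φ => Nat.pair 1 (OV.encode eM φ)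
  | .and φ ψ => Nat.pair 2 (Nat.pair (OV.encode eM φ) (OV.encode eM ψ))
  | .ex φ => Nat.pair 3 (OV.encode eM φ)
  | .box m φ => Nat.pair 4 (Nat.pair (eM m) (OV.encode eM φ))

/-- `L` is decidable: membership in `L` is computable w.r.t. the Gödel numbering -/
def DecidableLogic {M : Type} (eM : M → ℕ) (L : Set (OV M)) : Prop :=
  ComputablePred (fun n : ℕ => ∃ φ ∈ L, OV.encode eM φ = n)

/-- `L` is globally decidable: the global consequence relation is computable -/
def GloballyDecidable {M : Type} (eM : M → ℕ) (L : Set (OV M)) : Prop :=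
  ComputablePred (fun p : ℕ × ℕ =>
    ∃ φ ψ, GlobalConseq L φ ψ ∧ OV.encode eM φ = p.1 ∧ OV.encode eM ψ = p.2)

/-- the (local) finite `d`-model property -/
def FMP {M : Type} (d : DSem) (L : Set (OV M)) : Prop :=
  ∀ φ, φ ∉ L → ∃ (F : KFrame M) (𝔪 : KModel F), 𝔪.IsD d ∧ 𝔪.FiniteM ∧
    (∀ χ ∈ L, 𝔪.TrueIn χ) ∧ ∃ w, ¬ 𝔪.TrueAt φ w

/-- the global finite `d`-model property -/
def GlobalFMP {M : Type} (d : DSem) (L : Set (OV M)) : Prop :=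
  ∀ φ ψ, ¬ GlobalConseq L φ ψ →
    ∃ (F : KFrame M) (𝔪 : KModel F), 𝔪.IsD d ∧ 𝔪.FiniteM ∧
      (∀ χ ∈ L, 𝔪.TrueIn χ) ∧ 𝔪.TrueIn φ ∧ ∃ w, ¬ 𝔪.TrueAt ψ w

end OneVarML


namespace OneVarML

/-!
Seen from one component, the subformulas starting with an operator of the other component are mere
atoms; replacing them by atoms gives the surrogate of a formula in that component.  A surrogate may
be refutable although the formula belongs to the fusion, because the other component restricts the
sets of types (quasistates) which a world can realize.  This interaction has finite depth: only
formulas with code at most that of `φ` matter, and a box always has a larger code than its argument.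
Hence there is a computable formula `theta l i`, a theorem of the fusion, which says in component
`i` that each world reached in `k < l` steps has a quasistate, up to level `l - k`, consistent in
both components together with the formulas `theta` of the next lower level.  With `l` above the
code of `φ`, the formula `φ` belongs to the fusion if and only if the first component contains the
surrogate of `theta l → φ`.

For the substantial direction, the satisfiability of `theta` yields models of the two components in
which the same pairs of a level and a quasistate occur.  Disjoint unions of many copies make the
numbers of worlds with a given pair equal on both sides, and then the numbers of elements with a
given type at each pair of matched worlds.  After this the two models can be glued along bijections
between their worlds and between their elements, into a model based on a frame for the fusion.
-/

/-! ### Soundness -/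

section Semantics

variable {M : Type} {F : KFrame M}

theorem eval_imp (𝔪 : KModel F) (φ ψ : OV M) (w : F.W) (a : 𝔪.D) :
    𝔪.eval (OV.imp φ ψ) w a ↔ (𝔪.eval φ w a → 𝔪.eval ψ w a) := by
  simp [OV.imp, KModel.eval]

theorem eval_iff_clEval (𝔪 : KModel F) (w : F.W) {φ : OV M} (hφ : φ.boxFree) (a : 𝔪.dom w) :
    𝔪.eval φ w a ↔ OV.clEval (𝔪.dom w) (fun n => Subtype.val ⁻¹' 𝔪.I w n) φ a := by
  induction φ generalizing a with
  | atom n => rfl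
  | neg φ ih => exact not_congr (ih hφ a)
  | and φ ψ ihφ ihψ => exact and_congr (ihφ hφ.1 a) (ihψ hφ.2 a)
  | ex φ ih =>
    simp only [KModel.eval, OV.clEval, ← ih hφ]
    exact ⟨fun ⟨b, hb, h⟩ => ⟨⟨b, hb⟩, h⟩, fun ⟨b, h⟩ => ⟨b, b.2, h⟩⟩
  | box _ _ _ => exact hφ.elim

/-- The model in which the atom `n` is interpreted as the formula `σ n` is in `𝔪`. -/
def KModel.substitution (𝔪 : KModel F) (σ : ℕ → OV M) : KModel F :=
  { 𝔪 with I := fun w n => {a | 𝔪.eval (σ n) w a} }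

theorem eval_subst (𝔪 : KModel F) (σ : ℕ → OV M) (φ : OV M) (w : F.W) (a : 𝔪.D) :
    𝔪.eval (φ.subst σ) w a ↔ (𝔪.substitution σ).eval φ w a := by
  induction φ generalizing w a with
  | atom n => rfl
  | neg φ ih => exact not_congr (ih w a)
  | and φ ψ ihφ ihψ => exact and_congr (ihφ w a) (ihψ w a)
  | ex φ ih => exact exists_congr fun b => and_congr Iff.rfl (ih w b)
  | box m φ ih => exact forall_congr' fun v => imp_congr Iff.rfl (ih v a)

/-- The reduct of a model along a map of modal signatures. -/
def KModel.reduct {M' : Type} (f : M' → M) (𝔪 : KModel F) : KModel (F.reduct f) :=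
  { 𝔪 with expand := fun m => 𝔪.expand (f m) }

theorem eval_mapOp {M' : Type} (f : M' → M) (𝔪 : KModel F) (φ : OV M') (w : F.W) (a : 𝔪.D) :
    𝔪.eval (φ.mapOp f) w a ↔ (𝔪.reduct f).eval φ w a := by
  induction φ generalizing w a with
  | atom n => rfl
  | neg φ ih => exact not_congr (ih w a)
  | and φ ψ ihφ ihψ => exact and_congr (ihφ w a) (ihψ w a)
  | ex φ ih => exact exists_congr fun b => and_congr Iff.rfl (ih w b)
  | box m φ ih => exact forall_congr' fun v => imp_congr Iff.rfl (ih v a)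

theorem isOVLogic_logD (d : DSem) (C : Set (KFrame M)) : IsOVLogic (LogD d C) where
  fo := fun _ ⟨hfree, hvalid⟩ _ _ 𝔪 _ w a ha =>
    (eval_iff_clEval 𝔪 w hfree ⟨a, ha⟩).2 (hvalid _ _ _)
  kax := by
    intro m n k F _ 𝔪 _ w a _
    simp only [eval_imp, KModel.eval]
    exact fun himp hn v hv => himp v hv (hn v hv)
  mp := fun φ ψ himp hφ F hF 𝔪 hd w a ha =>
    (eval_imp 𝔪 φ ψ w a).1 (himp F hF 𝔪 hd w a ha) (hφ F hF 𝔪 hd w a ha)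
  gen := fun _ hφ F hF 𝔪 hd w _ _ ⟨b, hb, hnot⟩ => hnot (hφ F hF 𝔪 hd w b hb)
  nec := fun m _ hφ F hF 𝔪 hd w a ha v hv => hφ F hF 𝔪 hd v a (𝔪.expand m w v hv ha)
  subst := fun σ φ hφ F hF 𝔪 hd w a ha =>
    (eval_subst 𝔪 σ φ w a).2 (hφ F hF (𝔪.substitution σ) hd w a ha)

end Semantics

section Fusion

variable {M1 M2 : Type} (L1 : Set (OV M1)) (L2 : Set (OV M2))

theorem isOVLogic_fusion : IsOVLogic (fusion L1 L2) where
  fo := fun _ h _ hL => hL.1.fo h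
  kax := fun m n k _ hL => hL.1.kax m n k
  mp := fun φ ψ himp hφ L hL => hL.1.mp φ ψ (himp L hL) (hφ L hL)
  gen := fun φ h L hL => hL.1.gen φ (h L hL)
  nec := fun m φ h L hL => hL.1.nec m φ (h L hL)
  subst := fun σ φ h L hL => hL.1.subst σ φ (h L hL)

variable {L1 L2}

theorem mapOp_inl_mem_fusion {φ : OV M1} (hφ : φ ∈ L1) : φ.mapOp Sum.inl ∈ fusion L1 L2 :=
  fun _ hL => hL.2.1 ⟨φ, hφ, rfl⟩

theorem mapOp_inr_mem_fusion {φ : OV M2} (hφ : φ ∈ L2) : φ.mapOp Sum.inr ∈ fusion L1 L2 :=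
  fun _ hL => hL.2.2 ⟨φ, hφ, rfl⟩

theorem fusion_subset_logD {d : DSem} {C1 : Set (KFrame M1)} {C2 : Set (KFrame M2)}
    (h1 : L1 ⊆ LogD d C1) (h2 : L2 ⊆ LogD d C2) :
    fusion L1 L2 ⊆ LogD d (frameFusion C1 C2) := by
  refine fun φ hφ => hφ _ ⟨isOVLogic_logD d _, ?_, ?_⟩
  · rintro _ ⟨ψ, hψ, rfl⟩ F hF 𝔪 hd w a ha
    exact (eval_mapOp _ 𝔪 ψ w a).2 (h1 hψ _ hF.1 (𝔪.reduct Sum.inl) hd w a ha)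
  · rintro _ ⟨ψ, hψ, rfl⟩ F hF 𝔪 hd w a ha
    exact (eval_mapOp _ 𝔪 ψ w a).2 (h2 hψ _ hF.2 (𝔪.reduct Sum.inr) hd w a ha)

end Fusion

/-! ### Bisimulations -/

section Bisimulation

variable {M : Type}

/-- Bisimulations between points (pairs of a world and an element) of two models; atoms are
compared at all related points, quantifiers at related elements of the domains. -/
structure KModel.Bisimulation {F G : KFrame M} (𝔪 : KModel F) (𝔫 : KModel G)
    (Z : F.W → 𝔪.D → G.W → 𝔫.D → Prop) : Prop where
  atom : ∀ {w a v b}, Z w a v b → ∀ n, a ∈ 𝔪.I w n ↔ b ∈ 𝔫.I v n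
  ex_forth : ∀ {w a v b}, Z w a v b → ∀ a' ∈ 𝔪.dom w, ∃ b' ∈ 𝔫.dom v, Z w a' v b'
  ex_back : ∀ {w a v b}, Z w a v b → ∀ b' ∈ 𝔫.dom v, ∃ a' ∈ 𝔪.dom w, Z w a' v b'
  box_forth : ∀ {w a v b}, Z w a v b → ∀ m w', F.R m w w' → ∃ v', G.R m v v' ∧ Z w' a v' b
  box_back : ∀ {w a v b}, Z w a v b → ∀ m v', G.R m v v' → ∃ w', F.R m w w' ∧ Z w' a v' b

theorem KModel.Bisimulation.eval_iff {F G : KFrame M} {𝔪 : KModel F} {𝔫 : KModel G}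
    {Z : F.W → 𝔪.D → G.W → 𝔫.D → Prop} (hZ : 𝔪.Bisimulation 𝔫 Z) {w : F.W} {a : 𝔪.D}
    {v : G.W} {b : 𝔫.D} (h : Z w a v b) (φ : OV M) : 𝔪.eval φ w a ↔ 𝔫.eval φ v b := by
  induction φ generalizing w a v b with
  | atom n => exact hZ.atom h n
  | neg φ ih => exact not_congr (ih h)
  | and φ ψ ihφ ihψ => exact and_congr (ihφ h) (ihψ h)
  | ex φ ih =>
    constructor
    · rintro ⟨a', ha', hφ⟩
      obtain ⟨b', hb', h'⟩ := hZ.ex_forth h a' ha'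
      exact ⟨b', hb', (ih h').1 hφ⟩
    · rintro ⟨b', hb', hφ⟩
      obtain ⟨a', ha', h'⟩ := hZ.ex_back h b' hb'
      exact ⟨a', ha', (ih h').2 hφ⟩
  | box m φ ih =>
    constructor
    · intro hφ v' hv'
      obtain ⟨w', hw', h'⟩ := hZ.box_back h m v' hv'
      exact (ih h').1 (hφ w' hw')
    · intro hφ w' hw'
      obtain ⟨v', hv', h'⟩ := hZ.box_forth h m w' hw'
      exact (ih h').2 (hφ v' hv')

theorem logD_singleton_subset_of_equiv (d : DSem) {F G : KFrame M} (f : F.W ≃ G.W)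
    (hf : ∀ m w v, F.R m w v ↔ G.R m (f w) (f v)) : LogD d {G} ⊆ LogD d {F} := by
  rintro φ hφ _ rfl 𝔪 hd w a ha
  let 𝔫 : KModel G :=
    { D := 𝔪.D
      dom := fun v => 𝔪.dom (f.symm v)
      domNe := fun v => 𝔪.domNe _
      expand := fun m v v' hv => 𝔪.expand m _ _ (by simpa [hf] using hv)
      I := fun v => 𝔪.I (f.symm v) }
  have hZ : 𝔪.Bisimulation 𝔫 fun w a v b => v = f w ∧ b = a :=
    { atom := by rintro w a _ _ ⟨rfl, rfl⟩ n; simp [𝔫]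
      ex_forth := by rintro w a _ _ ⟨rfl, rfl⟩ b hb; exact ⟨b, by simpa [𝔫], rfl, rfl⟩
      ex_back := by rintro w a _ _ ⟨rfl, rfl⟩ b hb; exact ⟨b, by simpa [𝔫] using hb, rfl, rfl⟩
      box_forth := by
        rintro w a _ _ ⟨rfl, rfl⟩ m v hv
        exact ⟨f v, (hf m w v).1 hv, rfl, rfl⟩
      box_back := by
        rintro w a _ _ ⟨rfl, rfl⟩ m v hv
        exact ⟨f.symm v, (hf m _ _).2 (by simpa using hv), by simp, rfl⟩ }
  exact (hZ.eval_iff ⟨rfl, rfl⟩ φ).2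
    (hφ G rfl 𝔫 (fun h v => hd h _) (f w) a (by simpa [𝔫] using ha))

/-- The disjoint union of models over a common set `D` of elements, an element `a` of `D`
playing the part of `h i a` in the `i`-th model. -/
def KModel.disjUnion {ι : Type} (hι : Nonempty ι) {Fs : ι → KFrame M} (𝔪 : ∀ i, KModel (Fs i))
    (D : Type) (h : ∀ i, D → (𝔪 i).D) (hsurj : ∀ i, Function.Surjective (h i)) :
    KModel (KFrame.disjUnion hι Fs) where
  D := D
  dom x := h x.1 ⁻¹' (𝔪 x.1).dom x.2
  domNe x := ((𝔪 x.1).domNe x.2).preimage (hsurj x.1)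
  expand := by
    rintro m _ _ ⟨i, w, v, hwv, rfl, rfl⟩
    exact Set.preimage_mono ((𝔪 i).expand m w v hwv)
  I x n := h x.1 ⁻¹' (𝔪 x.1).I x.2 n

theorem KModel.eval_disjUnion {ι : Type} (hι : Nonempty ι) {Fs : ι → KFrame M}
    (𝔪 : ∀ i, KModel (Fs i)) (D : Type) (h : ∀ i, D → (𝔪 i).D)
    (hsurj : ∀ i, Function.Surjective (h i)) (φ : OV M) (x : Σ i, (Fs i).W) (a : D) :
    (KModel.disjUnion hι 𝔪 D h hsurj).eval φ x a ↔ (𝔪 x.1).eval φ x.2 (h x.1 a) := by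
  obtain ⟨i, w⟩ := x
  have hZ : (KModel.disjUnion hι 𝔪 D h hsurj).Bisimulation (𝔪 i)
      fun x a v b => x = ⟨i, v⟩ ∧ h i a = b :=
    { atom := by rintro _ a v _ ⟨rfl, rfl⟩ n; rfl
      ex_forth := by rintro _ _ v _ ⟨rfl, rfl⟩ a ha; exact ⟨h i a, ha, rfl, rfl⟩
      ex_back := by
        rintro _ _ v _ ⟨rfl, rfl⟩ b hb
        obtain ⟨a, rfl⟩ := hsurj i b
        exact ⟨a, hb, rfl, rfl⟩
      box_forth := by
        rintro _ a v _ ⟨rfl, rfl⟩ m _ ⟨j, v', u, hvu, hj, rfl⟩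
        cases hj
        exact ⟨u, hvu, rfl, rfl⟩
      box_back := by
        rintro _ a v _ ⟨rfl, rfl⟩ m u hvu
        exact ⟨⟨i, u⟩, ⟨i, v, u, hvu, rfl, rfl⟩, rfl, rfl⟩ }
  exact hZ.eval_iff ⟨rfl, rfl⟩ φ

/-- Strict `d`-models: `cd`-models, and those `xd`-models in which every domain leaves out some
element.  With the latter, the number of elements outside a domain never obstructs a matching
of two models. -/
def KModel.IsStrict {F : KFrame M} (𝔪 : KModel F) (d : DSem) : Prop :=
  ∀ w, 𝔪.dom w = Set.univ ↔ d = .cd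

theorem KModel.IsStrict.isD {F : KFrame M} {𝔪 : KModel F} {d : DSem} (h : 𝔪.IsStrict d) :
    𝔪.IsD d :=
  fun hd w => (h w).2 hd

theorem KModel.exists_isStrict {F : KFrame M} {d : DSem} {𝔪 : KModel F} (hd : 𝔪.IsD d) (w : F.W)
    {a : 𝔪.D} (ha : a ∈ 𝔪.dom w) :
    ∃ (𝔫 : KModel F) (b : 𝔫.D), 𝔫.IsStrict d ∧ b ∈ 𝔫.dom w ∧
      ∀ φ, 𝔫.eval φ w b ↔ 𝔪.eval φ w a := by
  cases d with
  | cd => exact ⟨𝔪, a, fun w => iff_of_true (hd rfl w) rfl, ha, fun _ => Iff.rfl⟩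
  | xd =>
    let 𝔫 : KModel F :=
      { D := Option 𝔪.D
        dom := fun w => some '' 𝔪.dom w
        domNe := fun w => (𝔪.domNe w).image _
        expand := fun m w v hwv => Set.image_mono (𝔪.expand m w v hwv)
        I := fun w n => some '' 𝔪.I w n }
    have hZ : 𝔫.Bisimulation 𝔪 fun w a v b => w = v ∧ a = some b :=
      { atom := by rintro w _ _ a ⟨rfl, rfl⟩ n; simp [𝔫]
        ex_forth := by rintro w _ _ a ⟨rfl, rfl⟩ _ ⟨b, hb, rfl⟩; exact ⟨b, hb, rfl, rfl⟩
        ex_back := by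
          rintro w _ _ a ⟨rfl, rfl⟩ b hb
          exact ⟨some b, Set.mem_image_of_mem _ hb, rfl, rfl⟩
        box_forth := by rintro w _ _ a ⟨rfl, rfl⟩ m v hv; exact ⟨v, hv, rfl, rfl⟩
        box_back := by rintro w _ _ a ⟨rfl, rfl⟩ m v hv; exact ⟨v, hv, rfl, rfl⟩ }
    refine ⟨𝔫, some a, fun w => iff_of_false (fun h => ?_) (by simp),
      Set.mem_image_of_mem _ ha, fun φ => hZ.eval_iff ⟨rfl, rfl⟩ φ⟩
    have hnone : none ∈ 𝔫.dom w := h ▸ Set.mem_univ _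
    simp [𝔫] at hnone

theorem exists_refutation_of_notMem_logD {d : DSem} {C : Set (KFrame M)} {φ : OV M}
    (hφ : φ ∉ LogD d C) :
    ∃ F ∈ C, ∃ 𝔪 : KModel F, 𝔪.IsStrict d ∧ ∃ w, ∃ a ∈ 𝔪.dom w, ¬ 𝔪.eval φ w a := by
  simp only [LogD, KModel.TrueIn, KModel.TrueAt, Set.mem_ofPred_eq, not_forall] at hφ
  obtain ⟨F, hF, 𝔪, hd, w, a, ha, hnot⟩ := hφ
  obtain ⟨𝔫, b, hstrict, hb, heq⟩ := KModel.exists_isStrict hd w ha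
  exact ⟨F, hF, 𝔫, hstrict, w, b, hb, fun h => hnot ((heq φ).1 h)⟩

end Bisimulation

/-! ### Gödel numbering -/

namespace OV

section Numbering

variable {N : Type} [Encodable N]

/-- The partial inverse of the Gödel numbering `OV.encode`. -/
def decode (n : ℕ) : Option (OV N) :=
  match h : n.unpair with
  | (0, x) => some (atom x)
  | (1, x) => (decode x).map neg
  | (2, x) => (decode x.unpair.1).bind fun φ => (decode x.unpair.2).map (and φ)
  | (3, x) => (decode x).map ex
  | (4, x) => (Encodable.decode x.unpair.1).bind fun m => (decode x.unpair.2).map (box m)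
  | _ => none
decreasing_by
  all_goals
    rw [← Nat.pair_unpair n, h]
    grind [Nat.add_le_pair, Nat.unpair_left_le, Nat.unpair_right_le]

theorem decode_pair (k x : ℕ) : (decode (Nat.pair k x) : Option (OV N)) =
    [some (atom x), (decode x).map neg,
      (decode x.unpair.1).bind fun φ => (decode x.unpair.2).map (and φ),
      (decode x).map ex,
      (Encodable.decode x.unpair.1).bind fun m => (decode x.unpair.2).map (box m)].getD k none := by
  rw [decode]
  rcases k with _ | _ | _ | _ | _ | k <;> split <;> simp_all [Nat.unpair_pair]

instance : Encodable (OV N) where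
  encode := OV.encode Encodable.encode
  decode := decode
  encodek φ := by
    induction φ <;> simp [OV.encode, decode_pair, *]

theorem lt_pair_of_le {k x y : ℕ} (hk : 0 < k) (hy : y ≤ x) : y < Nat.pair k x := by
  have := Nat.add_le_pair k x
  omega

theorem encode_lt_neg (φ : OV N) : Encodable.encode φ < Encodable.encode (neg φ) :=
  lt_pair_of_le one_pos le_rfl

theorem encode_lt_and_left (φ ψ : OV N) : Encodable.encode φ < Encodable.encode (and φ ψ) :=
  lt_pair_of_le two_pos (Nat.left_le_pair _ _)

theorem encode_lt_and_right (φ ψ : OV N) : Encodable.encode ψ < Encodable.encode (and φ ψ) :=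
  lt_pair_of_le two_pos (Nat.right_le_pair _ _)

theorem encode_lt_ex (φ : OV N) : Encodable.encode φ < Encodable.encode (ex φ) :=
  lt_pair_of_le three_pos le_rfl

theorem encode_lt_box (m : N) (φ : OV N) : Encodable.encode φ < Encodable.encode (box m φ) :=
  lt_pair_of_le four_pos (Nat.right_le_pair _ _)

end Numbering

end OV

/-! ### Surrogates -/

section Surrogate

variable {M N : Type} [Encodable N] {p : N → Option M} {f : M → N}

/-- The surrogate of a formula in the signature `M` carved out of `N` by the partial map `p`:
the maximal subformulas starting with an operator outside `M` become atoms.  Every atom is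
named by the code of the formula it stands for. -/
def OV.surrogate (p : N → Option M) : OV N → OV M
  | atom n => atom (Encodable.encode (atom n : OV N))
  | neg φ => neg (φ.surrogate p)
  | and φ ψ => and (φ.surrogate p) (ψ.surrogate p)
  | ex φ => ex (φ.surrogate p)
  | box m φ => (p m).elim (atom (Encodable.encode (box m φ))) fun k => box k (φ.surrogate p)

theorem OV.surrogate_box_some {m : N} {k : M} (h : p m = some k) (φ : OV N) :
    (box m φ).surrogate p = box k (φ.surrogate p) := by
  simp [surrogate, h]

theorem OV.surrogate_box_none {m : N} (h : p m = none) (φ : OV N) :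
    (box m φ).surrogate p = atom (Encodable.encode (box m φ)) := by
  simp [surrogate, h]

theorem OV.subst_mapOp_surrogate (hfp : Function.IsPartialInv f p) (φ : OV N) :
    ((φ.surrogate p).mapOp f).subst (fun n => (Encodable.decode n).getD (atom 0)) = φ := by
  induction φ with
  | atom n => simp [surrogate, mapOp, subst]
  | neg φ ih => simp only [surrogate, mapOp, subst, ih]
  | and φ ψ ihφ ihψ => simp only [surrogate, mapOp, subst, ihφ, ihψ]
  | ex φ ih => simp only [surrogate, mapOp, subst, ih]
  | box m φ ih =>
    cases h : p m with
    | none => simp [surrogate_box_none h, mapOp, subst]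
    | some k => simp only [surrogate_box_some h, mapOp, subst, ih, (hfp k m).1 h]

theorem IsOVLogic.mem_of_mapOp_surrogate_mem {L : Set (OV N)} (hL : IsOVLogic L)
    (hfp : Function.IsPartialInv f p) {φ : OV N} (h : (φ.surrogate p).mapOp f ∈ L) : φ ∈ L :=
  OV.subst_mapOp_surrogate hfp φ ▸ hL.subst _ _ h

end Surrogate

/-! ### Propositional reasoning -/

section Propositional

variable {N : Type}

/-- A truth assignment to all formulas respecting `¬` and `∧`. -/
structure IsVal (v : OV N → Prop) : Prop where
  neg : ∀ φ, v (.neg φ) ↔ ¬ v φ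
  and : ∀ φ ψ, v (.and φ ψ) ↔ v φ ∧ v ψ

theorem isVal_eval {M : Type} [Encodable N] {F : KFrame M} (𝔪 : KModel F)
    (p : N → Option M) (w : F.W) (a : 𝔪.D) :
    IsVal fun φ : OV N => 𝔪.eval (φ.surrogate p) w a :=
  ⟨fun _ => Iff.rfl, fun _ _ => Iff.rfl⟩

theorem IsVal.imp {v : OV N → Prop} (hv : IsVal v) (φ ψ : OV N) :
    v (.imp φ ψ) ↔ (v φ → v ψ) := by
  simp [OV.imp, hv.neg, hv.and]

theorem OV.boxFree_mapOp {M : Type} [IsEmpty M] (f : M → N) (φ : OV M) : (φ.mapOp f).boxFree := by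
  induction φ with
  | atom _ => trivial
  | neg _ ih => exact ih
  | and _ _ ihφ ihψ => exact ⟨ihφ, ihψ⟩
  | ex _ ih => exact ih
  | box m _ _ => exact isEmptyElim m

variable [Encodable N] {L : Set (OV N)}

-- Surrogates in the empty signature turn a tautology into a box-free one.
theorem IsOVLogic.mem_of_tautology (hL : IsOVLogic L) {φ : OV N} (hφ : ∀ v, IsVal v → v φ) :
    φ ∈ L := by
  let p : N → Option Empty := fun _ => none
  have hp : Function.IsPartialInv Empty.elim p := fun k => k.elim
  refine hL.mem_of_mapOp_surrogate_mem hp (hL.fo ⟨OV.boxFree_mapOp _ _, fun D I a => ?_⟩)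
  exact hφ (fun ψ => OV.clEval D I ((ψ.surrogate p).mapOp Empty.elim) a)
    ⟨fun _ => Iff.rfl, fun _ _ => Iff.rfl⟩

theorem IsOVLogic.mem_of_consequence (hL : IsOVLogic L) (Γ : List (OV N)) (hΓ : ∀ γ ∈ Γ, γ ∈ L)
    {φ : OV N} (h : ∀ v, IsVal v → (∀ γ ∈ Γ, v γ) → v φ) : φ ∈ L := by
  induction Γ generalizing φ with
  | nil => exact hL.mem_of_tautology fun v hv => h v hv (by simp)
  | cons γ Γ ih =>
    rw [List.forall_mem_cons] at hΓ
    refine hL.mp γ φ (ih hΓ.2 fun v hv hv' => ?_) hΓ.1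
    exact (hv.imp γ φ).2 fun hγ => h v hv (List.forall_mem_cons.2 ⟨hγ, hv'⟩)

end Propositional

/-! ### State descriptions -/

namespace OV

variable {N : Type}

/-- A tautology. -/
def top : OV N := .neg (.and (.atom 0) (.neg (.atom 0)))

/-- The disjunction of a list of formulas. -/
def disj (l : List (OV N)) : OV N := l.foldr .or (.neg top)

/-- The conjunction of the formulas `□θ` for the operators `□` of a list. -/
def boxes (ops : List N) (θ : OV N) : OV N := ops.foldr (fun m χ => .and (.box m θ) χ) top

/-- The state descriptions over a list of formulas: the conjunctions which contain each formula
of the list either plain or negated. -/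
def descriptions (l : List (OV N)) : List (OV N) :=
  l.foldr (fun φ ds => ds.map (.and φ) ++ ds.map (.and (.neg φ))) [top]

/-- A list of formulas which contains all those with code less than `l`. -/
def formulasBelow [Encodable N] (l : ℕ) : List (OV N) := (List.range l).filterMap Encodable.decode

/-- The formulas which say, for each state description over `formulasBelow l`, whether it is
satisfied by some element of the domain. -/
def quasiDescriptions [Encodable N] (l : ℕ) : List (OV N) :=
  descriptions ((descriptions (formulasBelow l)).map .ex)

theorem mem_formulasBelow [Encodable N] {φ : OV N} {l : ℕ} (h : Encodable.encode φ < l) :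
    φ ∈ formulasBelow l :=
  List.mem_filterMap.2 ⟨_, List.mem_range.2 h, Encodable.encodek φ⟩

end OV

namespace IsVal

open OV

variable {N : Type} {v v' : OV N → Prop}

theorem top (hv : IsVal v) : v top := by simp [OV.top, hv.neg, hv.and]

theorem disj (hv : IsVal v) (l : List (OV N)) : v (disj l) ↔ ∃ φ ∈ l, v φ := by
  induction l with
  | nil => simp [OV.disj, hv.neg, hv.top]
  | cons φ l ih =>
    have hor : v (OV.disj (φ :: l)) ↔ v φ ∨ v (OV.disj l) := by
      simp only [OV.disj, List.foldr_cons, OV.or, hv.neg, hv.and]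
      tauto
    simp [hor, ih]

theorem boxes (hv : IsVal v) (ops : List N) (θ : OV N) :
    v (boxes ops θ) ↔ ∀ m ∈ ops, v (.box m θ) := by
  induction ops with
  | nil => simpa [OV.boxes] using hv.top
  | cons m ops ih =>
    rw [List.forall_mem_cons, ← ih]
    exact hv.and _ _

theorem exists_descriptions (hv : IsVal v) (l : List (OV N)) : ∃ d ∈ descriptions l, v d := by
  induction l with
  | nil => exact ⟨_, List.mem_singleton_self _, hv.top⟩
  | cons φ l ih =>
    obtain ⟨d, hd, hvd⟩ := ih
    by_cases hφ : v φ
    · exact ⟨.and φ d, List.mem_append_left _ (List.mem_map_of_mem hd), (hv.and _ _).2 ⟨hφ, hvd⟩⟩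
    · exact ⟨.and (.neg φ) d, List.mem_append_right _ (List.mem_map_of_mem hd),
        (hv.and _ _).2 ⟨(hv.neg _).2 hφ, hvd⟩⟩

theorem iff_of_mem_descriptions (hv : IsVal v) (hv' : IsVal v') {l : List (OV N)} {d : OV N}
    (hd : d ∈ descriptions l) (hvd : v d) (hvd' : v' d) {φ : OV N} (hφ : φ ∈ l) :
    v φ ↔ v' φ := by
  induction l generalizing d with
  | nil => simp at hφ
  | cons ψ l ih =>
    rcases List.mem_append.1 hd with h | h <;> obtain ⟨d', hd', rfl⟩ := List.mem_map.1 h <;>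
      rw [hv.and] at hvd <;> rw [hv'.and] at hvd' <;> rcases List.mem_cons.1 hφ with rfl | hφ
    · exact iff_of_true hvd.1 hvd'.1
    · exact ih hd' hvd.2 hvd'.2 hφ
    · exact iff_of_false ((hv.neg _).1 hvd.1) ((hv'.neg _).1 hvd'.1)
    · exact ih hd' hvd.2 hvd'.2 hφ

end IsVal

/-! ### The consistency formulas -/

section Theta

open OV

variable {N ι : Type} [Encodable N]

/-- `q` is consistent with `χ j` in `Λ j`, for every `j`. -/
def Admissible (Λ : ι → Set (OV N)) (χ : ι → OV N) (q : OV N) : Prop :=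
  ∀ j, .neg (.and q (χ j)) ∉ Λ j

open scoped Classical in
/-- The formula `theta Λ ops l i` says that each world reached in `k < l` steps along the operators
of `ops i` has a quasistate, up to level `l - k`, which is consistent in every `Λ j`, even together
with the formulas `theta` of the next lower level at the successors along `ops j`. -/
noncomputable def theta (Λ : ι → Set (OV N)) (ops : ι → List N) : ℕ → ι → OV N
  | 0, _ => top
  | l + 1, i =>
    .and
      (disj ((quasiDescriptions (l + 1)).filter
        (Admissible Λ fun j => boxes (ops j) (theta Λ ops l j))))
      (boxes (ops i) (theta Λ ops l i))

variable {L : Set (OV N)}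

theorem IsOVLogic.boxes_mem (hL : IsOVLogic L) {θ : OV N} (hθ : θ ∈ L) (ops : List N) :
    boxes ops θ ∈ L := by
  induction ops with
  | nil => exact hL.mem_of_tautology fun v hv => hv.top
  | cons m ops ih =>
    refine hL.mem_of_consequence [.box m θ, boxes ops θ] (by simpa using ⟨hL.nec m θ hθ, ih⟩) ?_
    intro v hv h
    exact (hv.and _ _).2 ⟨h (.box m θ) (by simp), h (boxes ops θ) (by simp)⟩

theorem IsOVLogic.neg_mem_of_not_admissible (hL : IsOVLogic L) {Λ : ι → Set (OV N)}
    (hΛ : ∀ i, Λ i ⊆ L) {χ : ι → OV N} (hχ : ∀ i, χ i ∈ L) {q : OV N} (hq : ¬ Admissible Λ χ q) :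
    .neg q ∈ L := by
  obtain ⟨j, hj⟩ : ∃ j, .neg (.and q (χ j)) ∈ Λ j := by simpa [Admissible] using hq
  refine hL.mem_of_consequence [.neg (.and q (χ j)), χ j] (by simpa using ⟨hΛ j hj, hχ j⟩) ?_
  intro v hv h
  have hand : ¬ v (.and q (χ j)) := (hv.neg _).1 (h _ (by simp))
  exact (hv.neg q).2 fun hvq => hand ((hv.and _ _).2 ⟨hvq, h _ (by simp)⟩)

theorem IsOVLogic.theta_mem (hL : IsOVLogic L) {Λ : ι → Set (OV N)} (hΛ : ∀ i, Λ i ⊆ L)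
    (ops : ι → List N) (l : ℕ) (i : ι) : theta Λ ops l i ∈ L := by
  classical
  induction l generalizing i with
  | zero => exact hL.mem_of_tautology fun v hv => hv.top
  | succ l ih =>
    let χ : ι → OV N := fun j => boxes (ops j) (theta Λ ops l j)
    have hχ : ∀ j, χ j ∈ L := fun j => hL.boxes_mem (ih j) _
    let Q : List (OV N) := quasiDescriptions (l + 1)
    refine hL.mem_of_consequence (χ i :: (Q.filter fun q => ¬ Admissible Λ χ q).map .neg) ?_ ?_
    · refine List.forall_mem_cons.2 ⟨hχ i, List.forall_mem_map.2 fun q hq => ?_⟩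
      exact hL.neg_mem_of_not_admissible hΛ hχ (by simpa using (List.mem_filter.1 hq).2)
    · intro v hv h
      rw [List.forall_mem_cons, List.forall_mem_map] at h
      obtain ⟨q, hq, hvq⟩ : ∃ q ∈ Q, v q := hv.exists_descriptions _
      have hadm : Admissible Λ χ q := by
        by_contra hadm
        exact (hv.neg q).1 (h.2 q (List.mem_filter.2 ⟨hq, by simpa using hadm⟩)) hvq
      exact (hv.and _ _).2
        ⟨(hv.disj _).2 ⟨q, List.mem_filter.2 ⟨hq, by simpa using hadm⟩, hvq⟩, h.1⟩

end Theta

/-! ### Types and quasistates -/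

section Quasistate

open OV

variable {M M' N : Type} [Encodable N]

/-- The type of an element `a` at a world `w`: the formulas with code less than `l` whose
surrogates are true of it. -/
def pointType {F : KFrame M} (p : N → Option M) (𝔪 : KModel F) (l : ℕ) (w : F.W) (a : 𝔪.D) :
    Set (OV N) :=
  {φ | Encodable.encode φ < l ∧ 𝔪.eval (φ.surrogate p) w a}

/-- The quasistate of a world: the set of types realized in its domain. -/
def quasistate {F : KFrame M} (p : N → Option M) (𝔪 : KModel F) (l : ℕ) (w : F.W) :
    Set (Set (OV N)) :=
  pointType p 𝔪 l w '' 𝔪.dom w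

variable {F : KFrame M} {G : KFrame M'} {p : N → Option M} {p' : N → Option M'}

theorem quasistate_zero (p : N → Option M) (𝔪 : KModel F) (w : F.W) :
    quasistate p 𝔪 0 w = {∅} := by
  have h : ∀ a, pointType p 𝔪 0 w a = ∅ := fun a => by simp [pointType]
  simp [quasistate, h, (𝔪.domNe w).image_const]

theorem quasistate_subset_of_mem_quasiDescriptions {𝔪 : KModel F} {𝔫 : KModel G} {l : ℕ}
    {q : OV N} (hq : q ∈ quasiDescriptions l) {w : F.W} {a : 𝔪.D} {v : G.W} {b : 𝔫.D}
    (h𝔪 : 𝔪.eval (q.surrogate p) w a) (h𝔫 : 𝔫.eval (q.surrogate p') v b) :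
    quasistate p 𝔪 l w ⊆ quasistate p' 𝔫 l v := by
  rintro _ ⟨c, hc, rfl⟩
  obtain ⟨s, hs, hcs⟩ := (isVal_eval 𝔪 p w c).exists_descriptions (formulasBelow l)
  have hex : 𝔫.eval ((OV.ex s).surrogate p') v b :=
    ((isVal_eval 𝔪 p w a).iff_of_mem_descriptions (isVal_eval 𝔫 p' v b) hq h𝔪 h𝔫
      (List.mem_map_of_mem hs)).1 ⟨c, hc, hcs⟩
  obtain ⟨c', hc', hcs'⟩ := hex
  refine ⟨c', hc', Set.ext fun φ => and_congr_right fun hφ => ?_⟩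
  exact (isVal_eval 𝔫 p' v c').iff_of_mem_descriptions (isVal_eval 𝔪 p w c) hs hcs' hcs
    (mem_formulasBelow hφ)

theorem quasistate_eq_of_mem_quasiDescriptions {𝔪 : KModel F} {𝔫 : KModel G} {l : ℕ}
    {q : OV N} (hq : q ∈ quasiDescriptions l) {w : F.W} {a : 𝔪.D} {v : G.W} {b : 𝔫.D}
    (h𝔪 : 𝔪.eval (q.surrogate p) w a) (h𝔫 : 𝔫.eval (q.surrogate p') v b) :
    quasistate p 𝔪 l w = quasistate p' 𝔫 l v :=
  (quasistate_subset_of_mem_quasiDescriptions hq h𝔪 h𝔫).antisymm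
    (quasistate_subset_of_mem_quasiDescriptions hq h𝔫 h𝔪)

theorem eval_surrogate_boxes {f : M → N} (hfp : Function.IsPartialInv f p) {ops : List N}
    (hops : ∀ n, n ∈ ops ↔ n ∈ Set.range f) (𝔪 : KModel F) (θ : OV N) (w : F.W) (a : 𝔪.D) :
    𝔪.eval ((boxes ops θ).surrogate p) w a ↔ ∀ m v, F.R m w v → 𝔪.eval (θ.surrogate p) v a := by
  have hbox : ∀ m, (OV.box (f m) θ).surrogate p = .box m (θ.surrogate p) := fun m =>
    surrogate_box_some ((hfp m _).2 rfl) θ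
  rw [(isVal_eval 𝔪 p w a).boxes]
  simp [hops, hbox, KModel.eval]

/-- The tags realized by a class `C`: the pairs of a level `l` and the quasistate, up to level `l`,
of a world at which the surrogate of `θ l` is satisfied in some strict model based on a frame
of `C`. -/
def realizedTags (d : DSem) (C : Set (KFrame M)) (p : N → Option M) (θ : ℕ → OV N) :
    Set (ℕ × Set (Set (OV N))) :=
  {τ | ∃ F ∈ C, ∃ 𝔪 : KModel F, 𝔪.IsStrict d ∧ ∃ w, ∃ a ∈ 𝔪.dom w,
    𝔪.eval ((θ τ.1).surrogate p) w a ∧ quasistate p 𝔪 τ.1 w = τ.2}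

theorem exists_strict_model (d : DSem) (F : KFrame M) :
    ∃ 𝔪 : KModel F, 𝔪.IsStrict d := by
  let 𝔪 : KModel F :=
    { D := Unit
      dom := fun _ => Set.univ
      domNe := fun _ => Set.univ_nonempty
      expand := fun _ _ _ _ => subset_rfl
      I := fun _ _ => ∅ }
  obtain ⟨w⟩ := F.ne
  obtain ⟨𝔫, _, hstrict, _⟩ :=
    KModel.exists_isStrict (𝔪 := 𝔪) (d := d) (fun _ _ => rfl) w (Set.mem_univ ())
  exact ⟨𝔫, hstrict⟩

variable {ι : Type} {Λ : ι → Set (OV N)} {ops : ι → List N} {d : DSem}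

-- Admissibility passes the quasistate of a world from one class of frames to the other.
theorem realizedTags_subset {C : Set (KFrame M)} {C' : Set (KFrame M')} {i j : ι}
    (hΛ : ∀ φ, φ.surrogate p' ∈ LogD d C' → φ ∈ Λ j) (hC' : C'.Nonempty) :
    realizedTags d C p (theta Λ ops · i) ⊆ realizedTags d C' p' (theta Λ ops · j) := by
  classical
  rintro ⟨l, Q⟩ ⟨_, _, 𝔪, _, w, a, _, hθ, rfl : quasistate p 𝔪 l w = Q⟩
  cases l with
  | zero =>
    obtain ⟨G, hG⟩ := hC'
    obtain ⟨𝔫, h𝔫⟩ := exists_strict_model d G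
    obtain ⟨v⟩ := G.ne
    obtain ⟨b, hb⟩ := 𝔫.domNe v
    exact ⟨G, hG, 𝔫, h𝔫, v, b, hb, (isVal_eval 𝔫 p' v b).top, by simp [quasistate_zero]⟩
  | succ l =>
    let χ : ι → OV N := fun j => boxes (ops j) (theta Λ ops l j)
    obtain ⟨q, hq, hqw⟩ := ((isVal_eval 𝔪 p w a).disj _).1 hθ.1
    obtain ⟨hq, hadm⟩ : q ∈ quasiDescriptions (l + 1) ∧ Admissible Λ χ q := by
      simpa using List.mem_filter.1 hq
    obtain ⟨G, hG, 𝔫, h𝔫, v, b, hb, hqv⟩ :=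
      exists_refutation_of_notMem_logD (mt (hΛ (.neg (.and q (χ j)))) (hadm j))
    obtain ⟨hqv, hχv⟩ : 𝔫.eval (q.surrogate p') v b ∧ 𝔫.eval ((χ j).surrogate p') v b :=
      not_not.1 hqv
    refine ⟨G, hG, 𝔫, h𝔫, v, b, hb, ⟨?_, hχv⟩,
      quasistate_eq_of_mem_quasiDescriptions hq hqv hqw⟩
    exact ((isVal_eval 𝔫 p' v b).disj _).2
      ⟨q, List.mem_filter.2 ⟨hq, by simpa using hadm⟩, hqv⟩

end Quasistate

/-! ### Leveled models -/

section LeveledModel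

open OV

variable {M N : Type} [Encodable N]

/-- A strict `d`-model based on a frame of `C`, with a level for each world; the level bounds the
codes of the formulas for which the world is going to matter. -/
structure LeveledModel (d : DSem) (C : Set (KFrame M)) where
  frame : KFrame M
  mem : frame ∈ C
  model : KModel frame
  strict : model.IsStrict d
  level : frame.W → ℕ
  level_le : ∀ {m w v}, frame.R m w v → level w ≤ level v + 1

namespace LeveledModel

variable {d : DSem} {C : Set (KFrame M)} {p : N → Option M}

/-- The tag of a world: its level, with its quasistate up to that level. -/
def tag (c : LeveledModel d C) (p : N → Option M) (w : c.frame.W) : ℕ × Set (Set (OV N)) :=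
  (c.level w, quasistate p c.model (c.level w) w)

theorem exists_tag_eq_of_mem_realizedTags {f : M → N} (hfp : Function.IsPartialInv f p) {ι : Type}
    {Λ : ι → Set (OV N)} {ops : ι → List N} {i : ι} (hops : ∀ n, n ∈ ops i ↔ n ∈ Set.range f)
    {τ : ℕ × Set (Set (OV N))} (hτ : τ ∈ realizedTags d C p (theta Λ ops · i)) :
    ∃ c : LeveledModel d C, (∀ w, c.tag p w ∈ realizedTags d C p (theta Λ ops · i)) ∧
      ∃ w, c.tag p w = τ := by
  classical
  obtain ⟨l, Q⟩ := τ
  obtain ⟨F, hF, 𝔪, h𝔪, w₀, a₀, ha₀, hθ₀, rfl : quasistate p 𝔪 l w₀ = Q⟩ := hτ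
  let holds : F.W → ℕ → Prop := fun w k =>
    ∃ a ∈ 𝔪.dom w, 𝔪.eval ((theta Λ ops k i).surrogate p) w a
  have holds_zero : ∀ w, holds w 0 := fun w =>
    (𝔪.domNe w).imp fun a ha => ⟨ha, (isVal_eval 𝔪 p w a).top⟩
  have holds_of_rel : ∀ {m w v k}, F.R m w v → holds w (k + 1) → holds v k :=
    fun {m w v _} hwv ⟨a, ha, hθ⟩ =>
      ⟨a, 𝔪.expand m w v hwv ha, (eval_surrogate_boxes hfp hops 𝔪 _ w a).1 hθ.2 m v hwv⟩
  let level : F.W → ℕ := fun w => Nat.findGreatest (holds w) l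
  have holds_level : ∀ w, holds w (level w) := fun w =>
    Nat.findGreatest_spec (Nat.zero_le l) (holds_zero w)
  have level_le : ∀ {m w v}, F.R m w v → level w ≤ level v + 1 := by
    intro m w v hwv
    have hl : level w ≤ l := Nat.findGreatest_le l
    have hw := holds_level w
    cases h : level w with
    | zero => omega
    | succ k =>
      rw [h] at hw
      exact Nat.succ_le_succ (Nat.le_findGreatest (by omega) (holds_of_rel hwv hw))
  have level_root : level w₀ = l := Nat.findGreatest_eq ⟨a₀, ha₀, hθ₀⟩
  refine ⟨⟨F, hF, 𝔪, h𝔪, level, level_le⟩, fun w => ?_, w₀, by simp [tag, level_root]⟩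
  obtain ⟨a, ha, hθ⟩ := holds_level w
  exact ⟨F, hF, 𝔪, h𝔪, w, a, ha, hθ, rfl⟩

/-- The disjoint union of leveled models over a common set `D` of elements. -/
def disjUnion (hdu : ClosedDU C) {ι : Type} (hι : Nonempty ι) (c : ι → LeveledModel d C)
    (D : Type) (h : ∀ i, D → (c i).model.D) (hsurj : ∀ i, Function.Surjective (h i)) :
    LeveledModel d C where
  frame := KFrame.disjUnion hι fun i => (c i).frame
  mem := hdu ι hι _ fun i => (c i).mem
  model := KModel.disjUnion hι (fun i => (c i).model) D h hsurj
  strict := by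
    rintro ⟨i, w⟩
    change h i ⁻¹' (c i).model.dom w = Set.univ ↔ d = .cd
    rw [Set.preimage_eq_univ_iff, (hsurj i).range_eq, Set.univ_subset_iff, (c i).strict w]
  level x := (c x.1).level x.2
  level_le := by
    rintro m _ _ ⟨i, w, v, hwv, rfl, rfl⟩
    exact (c i).level_le hwv

section DisjUnion

variable (hdu : ClosedDU C) {ι : Type} (hι : Nonempty ι) (c : ι → LeveledModel d C)
  (D : Type) (h : ∀ i, D → (c i).model.D) (hsurj : ∀ i, Function.Surjective (h i))

theorem pointType_disjUnion (l : ℕ) (x : Σ i, (c i).frame.W) (a : D) :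
    pointType p (disjUnion hdu hι c D h hsurj).model l x a =
      pointType p (c x.1).model l x.2 (h x.1 a) :=
  Set.ext fun _ => and_congr_right fun _ =>
    KModel.eval_disjUnion hι (fun i => (c i).model) D h hsurj _ x a

theorem tag_disjUnion (x : Σ i, (c i).frame.W) :
    (disjUnion hdu hι c D h hsurj).tag p x = (c x.1).tag p x.2 := by
  obtain ⟨i, w⟩ := x
  refine Prod.ext rfl ?_
  calc
    _ = (fun a => pointType p (c i).model ((c i).level w) w (h i a)) ''
          (h i ⁻¹' (c i).model.dom w) :=
        Set.image_congr fun _ _ => pointType_disjUnion ..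
    _ = quasistate p (c i).model ((c i).level w) w := by
        rw [← Set.image_image (pointType p _ _ _) (h i), Set.image_preimage_eq _ (hsurj i),
          quasistate]

end DisjUnion

theorem exists_range_tag_eq (hdu : ClosedDU C) {S : Set (ℕ × Set (Set (OV N)))}
    (hS : S.Nonempty)
    (h : ∀ τ ∈ S, ∃ c : LeveledModel d C, (∀ w, c.tag p w ∈ S) ∧ ∃ w, c.tag p w = τ) :
    ∃ c : LeveledModel d C, Set.range (c.tag p) = S := by
  classical
  choose c htag w hw using fun τ : S => h τ.1 τ.2
  have hne : ∀ τ, Nonempty (c τ).model.D := fun τ => ((c τ).model.domNe (w τ)).to_type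
  refine ⟨disjUnion hdu hS.to_subtype c (∀ τ, (c τ).model.D) (fun τ a => a τ)
    (fun τ => Function.surjective_eval τ), ?_⟩
  ext τ
  constructor
  · rintro ⟨x, rfl⟩
    exact Set.mem_of_eq_of_mem (tag_disjUnion ..) (htag x.1 x.2)
  · intro hτ
    exact ⟨⟨⟨τ, hτ⟩, w ⟨τ, hτ⟩⟩, (tag_disjUnion ..).trans (hw ⟨τ, hτ⟩)⟩

end LeveledModel

end LeveledModel

/-! ### Matchings -/

open Cardinal in
theorem nonempty_fiber_equiv {K X : Type} [Infinite K] (hX : #X ≤ #K) {T : Type} (t : X → T)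
    (x₀ : X) : Nonempty ({x : Σ _ : K, X // t x.2 = t x₀} ≃ K) := by
  refine Cardinal.eq.1 (le_antisymm ?_ ?_)
  · calc #{x : Σ _ : K, X // t x.2 = t x₀} ≤ #(Σ _ : K, X) := mk_subtype_le _
      _ = #K * #X := by simp
      _ ≤ #K * #K := mul_le_mul_right hX _
      _ = #K := mul_eq_self (aleph0_le_mk K)
  · exact mk_le_of_injective (f := fun k => ⟨⟨k, x₀⟩, rfl⟩) fun k k' h => by simpa using h

-- If the infinite set `K` is large enough, then all non-empty fibres become equinumerous.
theorem exists_equiv_copies (X Y : Type) : ∃ K : Type, Nonempty K ∧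
    ∀ {T : Type} (s : X → T) (t : Y → T), Set.range s = Set.range t →
      ∃ e : (Σ _ : K, X) ≃ (Σ _ : K, Y), ∀ x, t (e x).2 = s x.2 := by
  refine ⟨ℕ ⊕ X ⊕ Y, inferInstance, fun {T} s t h => ?_⟩
  set K := ℕ ⊕ X ⊕ Y
  have hX : Cardinal.mk X ≤ Cardinal.mk K :=
    Cardinal.mk_le_of_injective (Sum.inr_injective.comp Sum.inl_injective)
  have hY : Cardinal.mk Y ≤ Cardinal.mk K :=
    Cardinal.mk_le_of_injective (Sum.inr_injective.comp Sum.inr_injective)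
  have fiberEquiv : ∀ τ, Nonempty
      ({x : Σ _ : K, X // s x.2 = τ} ≃ {y : Σ _ : K, Y // t y.2 = τ}) := by
    intro τ
    by_cases hτ : τ ∈ Set.range s
    · obtain ⟨y₀, hy₀⟩ := h ▸ hτ
      obtain ⟨x₀, rfl⟩ := hτ
      obtain ⟨e⟩ := nonempty_fiber_equiv hX s x₀
      obtain ⟨e'⟩ := nonempty_fiber_equiv hY t y₀
      exact ⟨e.trans (hy₀ ▸ e'.symm)⟩
    · have hτ' : τ ∉ Set.range t := h ▸ hτ
      have := Subtype.isEmpty_of_false fun (x : Σ _ : K, X) hx => hτ ⟨x.2, hx⟩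
      have := Subtype.isEmpty_of_false fun (y : Σ _ : K, Y) hy => hτ' ⟨y.2, hy⟩
      exact ⟨Equiv.equivOfIsEmpty _ _⟩
  refine ⟨(Equiv.sigmaFiberEquiv fun x : Σ _ : K, X => s x.2).symm.trans
    ((Equiv.sigmaCongrRight fun τ => (fiberEquiv τ).some).trans
      (Equiv.sigmaFiberEquiv fun y : Σ _ : K, Y => t y.2)), fun x => ?_⟩
  exact ((fiberEquiv (s x.2)).some ⟨x, rfl⟩).2

section Matching

open OV

variable {M1 M2 N : Type} [Encodable N] {d : DSem} {C1 : Set (KFrame M1)} {C2 : Set (KFrame M2)}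

namespace LeveledModel

open scoped Classical in
/-- The type of an element up to the level of a world, if the element is in the domain. -/
noncomputable def label (c : LeveledModel d C1) (p : N → Option M1) (w : c.frame.W)
    (a : c.model.D) : Option (Set (OV N)) :=
  if a ∈ c.model.dom w then some (pointType p c.model (c.level w) w a) else none

theorem range_label (c : LeveledModel d C1) (p : N → Option M1) (w : c.frame.W) :
    Set.range (c.label p w) = some '' (c.tag p w).2 ∪ {o | o = none ∧ d ≠ .cd} := by
  have hnone : none ∈ Set.range (c.label p w) ↔ d ≠ .cd := by
    simp [label, ← c.strict w, Set.eq_univ_iff_forall]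
  ext (_ | t)
  · simp [hnone]
  · simp [label, tag, quasistate]

theorem label_disjUnion (hdu : ClosedDU C1) {ι : Type} (hι : Nonempty ι)
    (c : ι → LeveledModel d C1) (D : Type) (h : ∀ i, D → (c i).model.D)
    (hsurj : ∀ i, Function.Surjective (h i)) (p : N → Option M1) (x : Σ i, (c i).frame.W) (a : D) :
    (disjUnion hdu hι c D h hsurj).label p x a = (c x.1).label p x.2 (h x.1 a) := by
  obtain ⟨i, w⟩ := x
  classical
  exact if_congr Iff.rfl (congrArg some (pointType_disjUnion ..)) rfl

/-- A matching of two leveled models: bijections between the worlds and between the elements which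
preserve levels, domains and, up to the levels, types. -/
structure Matching (c1 : LeveledModel d C1) (c2 : LeveledModel d C2) (p1 : N → Option M1)
    (p2 : N → Option M2) where
  world : c1.frame.W ≃ c2.frame.W
  elem : c1.model.D ≃ c2.model.D
  level_eq : ∀ w, c2.level (world w) = c1.level w
  label_eq : ∀ w a, c2.label p2 (world w) (elem a) = c1.label p1 w a

variable {p1 : N → Option M1} {p2 : N → Option M2}

theorem exists_world_equiv (hdu1 : ClosedDU C1) (hdu2 : ClosedDU C2) {c1 : LeveledModel d C1}
    {c2 : LeveledModel d C2} (h : Set.range (c1.tag p1) = Set.range (c2.tag p2)) :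
    ∃ (c1' : LeveledModel d C1) (c2' : LeveledModel d C2) (f : c1'.frame.W ≃ c2'.frame.W),
      (∀ w, c2'.tag p2 (f w) = c1'.tag p1 w) ∧ ∀ w, ∃ w', c1'.tag p1 w' = c1.tag p1 w := by
  obtain ⟨K, hK, hequiv⟩ := exists_equiv_copies c1.frame.W c2.frame.W
  obtain ⟨f, hf⟩ := hequiv _ _ h
  refine ⟨disjUnion hdu1 hK (fun _ => c1) c1.model.D (fun _ => id) fun _ => Function.surjective_id,
    disjUnion hdu2 hK (fun _ => c2) c2.model.D (fun _ => id) fun _ => Function.surjective_id, f,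
    fun x => ?_, fun w => ⟨⟨hK.some, w⟩, tag_disjUnion ..⟩⟩
  exact ((tag_disjUnion ..).trans (hf x)).trans (tag_disjUnion ..).symm

-- The copies are indexed by all ways of identifying `D` with the elements of either model.
theorem exists_matching_of_world_equiv (hdu1 : ClosedDU C1) (hdu2 : ClosedDU C2)
    {c1 : LeveledModel d C1} {c2 : LeveledModel d C2} (f : c1.frame.W ≃ c2.frame.W)
    (hf : ∀ w, c2.tag p2 (f w) = c1.tag p1 w) :
    ∃ (c1' : LeveledModel d C1) (c2' : LeveledModel d C2), Nonempty (c1'.Matching c2' p1 p2) ∧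
      ∀ w, ∃ w', c1'.tag p1 w' = c1.tag p1 w := by
  obtain ⟨K, hK, hequiv⟩ := exists_equiv_copies c1.model.D c2.model.D
  have hlabel : ∀ w, Set.range (c1.label p1 w) = Set.range (c2.label p2 (f w)) := fun w => by
    rw [range_label, range_label, hf]
  choose g hg using fun w => hequiv _ _ (hlabel w)
  let D : Type := Σ _ : K, c1.model.D
  let J1 : Type := D ≃ Σ _ : K, c1.model.D
  let J2 : Type := D ≃ Σ _ : K, c2.model.D
  let world : (Σ _ : J1, c1.frame.W) ≃ Σ _ : J2, c2.frame.W :=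
    { toFun := fun x => ⟨x.1.trans (g x.2), f x.2⟩
      invFun := fun x => ⟨x.1.trans (g (f.symm x.2)).symm, f.symm x.2⟩
      left_inv := fun x => by simp [Equiv.trans_assoc]
      right_inv := fun x => by simp [Equiv.trans_assoc] }
  have hJ1 : Nonempty J1 := ⟨Equiv.refl _⟩
  have hJ2 : Nonempty J2 := c1.frame.ne.map g
  have surjective_snd : ∀ {X : Type} (j : D ≃ Σ _ : K, X), Function.Surjective fun a => (j a).2 :=
    fun j x => ⟨j.symm ⟨hK.some, x⟩, by simp⟩
  refine ⟨disjUnion hdu1 hJ1 (fun _ => c1) D (fun j a => (j a).2) surjective_snd,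
    disjUnion hdu2 hJ2 (fun _ => c2) D (fun j a => (j a).2) surjective_snd,
    ⟨{ world := world
       elem := Equiv.refl D
       level_eq := fun x => congrArg Prod.fst (hf x.2)
       label_eq := fun x a => ?_ }⟩, fun w => ⟨⟨Equiv.refl _, w⟩, tag_disjUnion ..⟩⟩
  exact ((label_disjUnion ..).trans (hg x.2 (x.1 a))).trans (label_disjUnion ..).symm

theorem exists_matching (hdu1 : ClosedDU C1) (hdu2 : ClosedDU C2) {c1 : LeveledModel d C1}
    {c2 : LeveledModel d C2} (h : Set.range (c1.tag p1) = Set.range (c2.tag p2)) :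
    ∃ (c1' : LeveledModel d C1) (c2' : LeveledModel d C2), Nonempty (c1'.Matching c2' p1 p2) ∧
      ∀ w, ∃ w', c1'.tag p1 w' = c1.tag p1 w := by
  obtain ⟨c1', c2', f, hf, hc1'⟩ := exists_world_equiv hdu1 hdu2 h
  obtain ⟨c1'', c2'', μ, hc1''⟩ := exists_matching_of_world_equiv hdu1 hdu2 f hf
  refine ⟨c1'', c2'', μ, fun w => ?_⟩
  obtain ⟨w', hw'⟩ := hc1' w
  exact (hc1'' w').imp fun w'' hw'' => hw''.trans hw'

end LeveledModel

end Matching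

/-! ### Gluing along a matching -/

section Gluing

open OV

variable {M1 M2 : Type} {d : DSem} {C1 : Set (KFrame M1)} {C2 : Set (KFrame M2)}

namespace LeveledModel.Matching

section General

variable {N : Type} [Encodable N] {c1 : LeveledModel d C1} {c2 : LeveledModel d C2}
  {p1 : N → Option M1} {p2 : N → Option M2}

theorem mem_dom_iff (μ : c1.Matching c2 p1 p2) (w : c1.frame.W) (a : c1.model.D) :
    μ.elem a ∈ c2.model.dom (μ.world w) ↔ a ∈ c1.model.dom w := by
  classical
  have h := congrArg Option.isSome (μ.label_eq w a)
  simpa [label, apply_ite Option.isSome] using h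

theorem eval_iff (μ : c1.Matching c2 p1 p2) {w : c1.frame.W} {a : c1.model.D}
    (ha : a ∈ c1.model.dom w) {φ : OV N} (hφ : Encodable.encode φ < c1.level w) :
    c2.model.eval (φ.surrogate p2) (μ.world w) (μ.elem a) ↔
      c1.model.eval (φ.surrogate p1) w a := by
  have h := μ.label_eq w a
  rw [label, if_pos ((μ.mem_dom_iff w a).2 ha), label, if_pos ha, Option.some_inj] at h
  simpa [pointType, μ.level_eq, hφ] using Set.ext_iff.1 h φ

end General

variable [Encodable M1] [Encodable M2] {c1 : LeveledModel d C1} {c2 : LeveledModel d C2}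
  (μ : c1.Matching c2 (N := M1 ⊕ M2) Sum.getLeft? Sum.getRight?)

/-- The fusion of the two frames of a matching, on the worlds of the first. -/
def frame : KFrame (M1 ⊕ M2) where
  W := c1.frame.W
  ne := c1.frame.ne
  R := Sum.elim c1.frame.R fun m w v => c2.frame.R m (μ.world w) (μ.world v)

/-- The model on the fusion of the frames which inherits its elements and domains from the first
model, and the truth values of the atoms from their surrogates. -/
def model : KModel μ.frame where
  D := c1.model.D
  dom := c1.model.dom
  domNe := c1.model.domNe
  expand := by
    rintro (m | m) w v hwv a ha
    · exact c1.model.expand m w v hwv ha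
    · exact (μ.mem_dom_iff v a).1 (c2.model.expand m _ _ hwv ((μ.mem_dom_iff w a).2 ha))
  I w n := c1.model.I w (Encodable.encode (.atom n : OV (M1 ⊕ M2)))

theorem eval_model {φ : OV (M1 ⊕ M2)} {w : c1.frame.W} {a : c1.model.D}
    (ha : a ∈ c1.model.dom w) (hφ : Encodable.encode φ < c1.level w) :
    μ.model.eval φ w a ↔ c1.model.eval (φ.surrogate Sum.getLeft?) w a := by
  induction φ generalizing w a with
  | atom n => rfl
  | neg φ ih => exact not_congr (ih ha ((encode_lt_neg φ).trans hφ))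
  | and φ ψ ihφ ihψ =>
    exact and_congr (ihφ ha ((encode_lt_and_left φ ψ).trans hφ))
      (ihψ ha ((encode_lt_and_right φ ψ).trans hφ))
  | ex φ ih =>
    exact exists_congr fun b => and_congr_right fun hb => ih hb ((encode_lt_ex φ).trans hφ)
  | box m φ ih =>
    have hlt := encode_lt_box m φ
    rcases m with m | m
    · refine forall₂_congr fun v hwv => ih (c1.model.expand m w v hwv ha) ?_
      have := c1.level_le hwv
      omega
    · rw [← μ.eval_iff ha hφ]
      refine μ.world.forall_congr fun v => forall_congr' fun hwv => ?_
      have hav : a ∈ c1.model.dom v :=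
        (μ.mem_dom_iff v a).1 (c2.model.expand m _ _ hwv ((μ.mem_dom_iff w a).2 ha))
      have hφv : Encodable.encode φ < c1.level v := by
        have := c2.level_le hwv
        rw [μ.level_eq, μ.level_eq] at this
        omega
      rw [ih hav hφv, μ.eval_iff hav hφv]

theorem eval_of_mem_fusion
    (μ : c1.Matching c2 (N := M1 ⊕ M2) Sum.getLeft? Sum.getRight?) {φ : OV (M1 ⊕ M2)}
    (hφ : φ ∈ fusion (LogD d C1) (LogD d C2)) {w : c1.frame.W} {a : c1.model.D}
    (ha : a ∈ c1.model.dom w) (hlt : Encodable.encode φ < c1.level w) :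
    c1.model.eval (φ.surrogate Sum.getLeft?) w a := by
  have h1 : LogD d C1 ⊆ LogD d {μ.frame.reduct Sum.inl} := by
    rintro ψ hψ _ rfl
    exact hψ _ c1.mem
  have h2 : LogD d C2 ⊆ LogD d {μ.frame.reduct Sum.inr} := fun ψ hψ =>
    logD_singleton_subset_of_equiv d μ.world (fun _ _ _ => Iff.rfl)
      (by rintro _ rfl; exact hψ _ c2.mem)
  have hisD : μ.model.IsD d := c1.strict.isD
  exact (μ.eval_model ha hlt).1
    (fusion_subset_logD h1 h2 hφ μ.frame ⟨rfl, rfl⟩ μ.model hisD w a ha)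

end LeveledModel.Matching

end Gluing

/-! ### Characterization of the fusion -/

section Characterization

open OV

variable {M1 M2 : Type}

/-- The formulas of the joint language whose surrogates belong to `L1` and to `L2`, respectively. -/
def componentLogic (L1 : Set (OV M1)) (L2 : Set (OV M2)) [Encodable M1] [Encodable M2] :
    Bool → Set (OV (M1 ⊕ M2))
  | false => {φ | φ.surrogate Sum.getLeft? ∈ L1}
  | true => {φ | φ.surrogate Sum.getRight? ∈ L2}

variable (M1 M2) in
/-- The modal operators of `M1` and of `M2`, respectively. -/
noncomputable def componentOps [Finite M1] [Finite M2] : Bool → List (M1 ⊕ M2)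
  | false => (Set.range Sum.inl).toFinite.toFinset.toList
  | true => (Set.range Sum.inr).toFinite.toFinset.toList

theorem isPartialInv_getLeft? :
    Function.IsPartialInv (Sum.inl : M1 → M1 ⊕ M2) Sum.getLeft? :=
  fun _ _ => by rw [Sum.getLeft?_eq_some_iff, eq_comm]

theorem isPartialInv_getRight? :
    Function.IsPartialInv (Sum.inr : M2 → M1 ⊕ M2) Sum.getRight? :=
  fun _ _ => by rw [Sum.getRight?_eq_some_iff, eq_comm]

theorem componentLogic_subset_fusion [Encodable M1] [Encodable M2] (L1 : Set (OV M1))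
    (L2 : Set (OV M2)) : ∀ i, componentLogic L1 L2 i ⊆ fusion L1 L2
  | false => fun _ hφ => (isOVLogic_fusion L1 L2).mem_of_mapOp_surrogate_mem
      isPartialInv_getLeft? (mapOp_inl_mem_fusion hφ)
  | true => fun _ hφ => (isOVLogic_fusion L1 L2).mem_of_mapOp_surrogate_mem
      isPartialInv_getRight? (mapOp_inr_mem_fusion hφ)

variable [Finite M1] [Finite M2] [Encodable M1] [Encodable M2] {d : DSem} {C1 : Set (KFrame M1)}
  {C2 : Set (KFrame M2)}

variable (d C1 C2) in
/-- The formulas `theta` for the components `Log_d C1` and `Log_d C2`. -/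
noncomputable abbrev thetaLogD : ℕ → Bool → OV (M1 ⊕ M2) :=
  theta (componentLogic (LogD d C1) (LogD d C2)) (componentOps M1 M2)

theorem realizedTags_thetaLogD (hC1 : C1.Nonempty) (hC2 : C2.Nonempty) :
    realizedTags d C1 Sum.getLeft? (thetaLogD d C1 C2 · false) =
      realizedTags d C2 Sum.getRight? (thetaLogD d C1 C2 · true) :=
  (realizedTags_subset (fun _ h => h) hC2).antisymm (realizedTags_subset (fun _ h => h) hC1)

theorem exists_matching_of_mem_realizedTags (hC1 : C1.Nonempty) (hC2 : C2.Nonempty)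
    (hdu1 : ClosedDU C1) (hdu2 : ClosedDU C2) {τ : ℕ × Set (Set (OV (M1 ⊕ M2)))}
    (hτ : τ ∈ realizedTags d C1 Sum.getLeft? (thetaLogD d C1 C2 · false)) :
    ∃ (c1 : LeveledModel d C1) (c2 : LeveledModel d C2),
      Nonempty (c1.Matching c2 (N := M1 ⊕ M2) Sum.getLeft? Sum.getRight?) ∧
        ∃ w, c1.tag Sum.getLeft? w = τ := by
  have hS := realizedTags_thetaLogD (d := d) hC1 hC2
  obtain ⟨c1, hc1⟩ := LeveledModel.exists_range_tag_eq hdu1 ⟨τ, hτ⟩ fun _ hσ =>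
    LeveledModel.exists_tag_eq_of_mem_realizedTags (f := Sum.inl) isPartialInv_getLeft?
      (by simp [componentOps]) hσ
  obtain ⟨c2, hc2⟩ := LeveledModel.exists_range_tag_eq hdu2 ⟨τ, hS ▸ hτ⟩ fun _ hσ =>
    LeveledModel.exists_tag_eq_of_mem_realizedTags (f := Sum.inr) isPartialInv_getRight?
      (by simp [componentOps]) hσ
  obtain ⟨c1', c2', μ, hμ⟩ := LeveledModel.exists_matching hdu1 hdu2 (hc1.trans (hS.trans hc2.symm))
  obtain ⟨w, rfl⟩ : τ ∈ Set.range (c1.tag Sum.getLeft?) := hc1 ▸ hτ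
  exact ⟨c1', c2', μ, hμ w⟩

theorem imp_thetaLogD_mem (hC1 : C1.Nonempty) (hC2 : C2.Nonempty)
    (hdu1 : ClosedDU C1) (hdu2 : ClosedDU C2) {φ : OV (M1 ⊕ M2)}
    (hφ : φ ∈ fusion (LogD d C1) (LogD d C2)) :
    .imp (thetaLogD d C1 C2 (Encodable.encode φ + 1) false) φ ∈
      componentLogic (LogD d C1) (LogD d C2) false := by
  by_contra hnot
  obtain ⟨F, hF, 𝔪, h𝔪, w, a, ha, hθφ⟩ := exists_refutation_of_notMem_logD hnot
  obtain ⟨hθ, hφa⟩ := Classical.not_imp.1 (mt ((isVal_eval 𝔪 _ w a).imp _ φ).2 hθφ)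
  let l := Encodable.encode φ + 1
  have hτ : (l, quasistate Sum.getLeft? 𝔪 l w) ∈
      realizedTags d C1 Sum.getLeft? (thetaLogD d C1 C2 · false) :=
    ⟨F, hF, 𝔪, h𝔪, w, a, ha, hθ, rfl⟩
  obtain ⟨c1, c2, ⟨μ⟩, v, hv⟩ := exists_matching_of_mem_realizedTags hC1 hC2 hdu1 hdu2 hτ
  have hlevel : c1.level v = l := congrArg Prod.fst hv
  have hquasi : quasistate Sum.getLeft? c1.model (c1.level v) v =
    quasistate Sum.getLeft? 𝔪 l w := congrArg Prod.snd hv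
  obtain ⟨b, hb, hab⟩ : pointType Sum.getLeft? 𝔪 l w a ∈
      quasistate Sum.getLeft? c1.model (c1.level v) v := by
    rw [hquasi]
    exact ⟨a, ha, rfl⟩
  have hlt : Encodable.encode φ < c1.level v := by omega
  have hmem : φ ∈ pointType Sum.getLeft? 𝔪 l w a := by
    rw [← hab]
    exact ⟨hlt, μ.eval_of_mem_fusion hφ hb hlt⟩
  exact hφa hmem.2

theorem mem_fusion_logD_iff (hC1 : C1.Nonempty) (hC2 : C2.Nonempty)
    (hdu1 : ClosedDU C1) (hdu2 : ClosedDU C2) (φ : OV (M1 ⊕ M2)) :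
    φ ∈ fusion (LogD d C1) (LogD d C2) ↔
      .imp (thetaLogD d C1 C2 (Encodable.encode φ + 1) false) φ ∈
        componentLogic (LogD d C1) (LogD d C2) false := by
  refine ⟨imp_thetaLogD_mem hC1 hC2 hdu1 hdu2, fun h => ?_⟩
  have hL := isOVLogic_fusion (LogD d C1) (LogD d C2)
  have hΛ := componentLogic_subset_fusion (LogD d C1) (LogD d C2)
  exact hL.mp _ φ (hΛ false h) (hL.theta_mem hΛ _ _ false)

end Characterization

/-! ### Computability of operations on formulas -/

namespace OV

section Fold

variable {N σ : Type}

/-- The function defined by iteration on formulas from one operation for each constructor. -/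
def fold (fatom : ℕ → σ) (fneg : σ → σ) (fand : σ → σ → σ) (fex : σ → σ) (fbox : N → σ → σ) :
    OV N → σ
  | atom n => fatom n
  | neg φ => fneg (φ.fold fatom fneg fand fex fbox)
  | and φ ψ => fand (φ.fold fatom fneg fand fex fbox) (ψ.fold fatom fneg fand fex fbox)
  | ex φ => fex (φ.fold fatom fneg fand fex fbox)
  | box m φ => fbox m (φ.fold fatom fneg fand fex fbox)

variable {fatom : ℕ → σ} {fneg : σ → σ} {fand : σ → σ → σ} {fex : σ → σ} {fbox : N → σ → σ}

variable (fatom fneg fand fex fbox) in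
/-- The value of `fold` at the formula with code `n`, computed from the list `l` of its values at
the formulas with smaller codes. -/
def foldStep [Encodable N] (n : ℕ) (l : List (Option σ)) : Option σ :=
  [some (fatom n.unpair.2),
    (l.getD n.unpair.2 none).map fneg,
    (l.getD n.unpair.2.unpair.1 none).bind fun s =>
      (l.getD n.unpair.2.unpair.2 none).map (fand s),
    (l.getD n.unpair.2 none).map fex,
    (Encodable.decode n.unpair.2.unpair.1 : Option N).bind fun m =>
      (l.getD n.unpair.2.unpair.2 none).map (fbox m)].getD n.unpair.1 none

theorem foldStep_map_range [Encodable N] (n : ℕ) :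
    foldStep fatom fneg fand fex fbox n ((List.range n).map fun k =>
      (decode k : Option (OV N)).map (fold fatom fneg fand fex fbox)) =
      (decode n : Option (OV N)).map (fold fatom fneg fand fex fbox) := by
  obtain ⟨k, x, rfl⟩ : ∃ k x, n = Nat.pair k x := ⟨_, _, (Nat.pair_unpair n).symm⟩
  have hrange {k y : ℕ} (hk : 0 < k) (hy : y ≤ x) : (List.range (Nat.pair k x))[y]? = some y :=
    List.getElem?_range (lt_pair_of_le hk hy)
  rw [decode_pair, foldStep]
  rcases k with _ | _ | _ | _ | _ | k <;>
    simp [hrange, Nat.unpair_left_le, Nat.unpair_right_le, fold, Option.map_bind, Option.bind_map,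
      Option.map_map, Function.comp_def]

theorem fold_encode [Encodable N] :
    fold (Nat.pair 0) (Nat.pair 1) (fun k n => Nat.pair 2 (Nat.pair k n)) (Nat.pair 3)
      (fun m n => Nat.pair 4 (Nat.pair (Encodable.encode m) n)) =
        (Encodable.encode : OV N → ℕ) := by
  funext φ
  induction φ <;> simp_all [fold, Encodable.encode, OV.encode]

variable [Primcodable N] [Primcodable σ]

theorem primrec_foldStep (hatom : Primrec fatom) (hneg : Primrec fneg)
    (hand : Primrec₂ fand) (hex : Primrec fex) (hbox : Primrec₂ fbox) :
    Primrec₂ (foldStep fatom fneg fand fex fbox) := by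
  have hx : Primrec fun p : ℕ × List (Option σ) => p.1.unpair.2 :=
    Primrec.snd.comp (Primrec.unpair.comp Primrec.fst)
  have hx' : Primrec fun p : ℕ × List (Option σ) => p.1.unpair.2.unpair := Primrec.unpair.comp hx
  have hget {i : ℕ × List (Option σ) → ℕ} (hi : Primrec i) :
      Primrec fun p : ℕ × List (Option σ) => p.2.getD (i p) none :=
    (Primrec.list_getD none).comp Primrec.snd hi
  have hright := hget (Primrec.snd.comp hx')
  refine (Primrec.list_getD none).comp
    (Primrec.list_cons.comp ?_ <| Primrec.list_cons.comp ?_ <| Primrec.list_cons.comp ?_ <|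
      Primrec.list_cons.comp ?_ <| Primrec.list_cons.comp ?_ <| Primrec.const [])
    (Primrec.fst.comp (Primrec.unpair.comp Primrec.fst))
  · exact Primrec.option_some.comp (hatom.comp hx)
  · exact Primrec.option_map (hget hx) (hneg.comp Primrec.snd).to₂
  · exact Primrec.option_bind (hget (Primrec.fst.comp hx')) (Primrec.option_map
      (hright.comp Primrec.fst) (hand.comp (Primrec.snd.comp Primrec.fst) Primrec.snd).to₂).to₂
  · exact Primrec.option_map (hget hx) (hex.comp Primrec.snd).to₂
  · exact Primrec.option_bind (Primrec.decode.comp (Primrec.fst.comp hx')) (Primrec.option_map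
      (hright.comp Primrec.fst) (hbox.comp (Primrec.snd.comp Primrec.fst) Primrec.snd).to₂).to₂

theorem primrec_decode_map_fold (hatom : Primrec fatom) (hneg : Primrec fneg)
    (hand : Primrec₂ fand) (hex : Primrec fex) (hbox : Primrec₂ fbox) :
    Primrec fun n => (decode n : Option (OV N)).map (fold fatom fneg fand fex fbox) := by
  have hstep := primrec_foldStep hatom hneg hand hex hbox
  refine (Primrec.nat_strong_rec (fun (_ : Unit) n => (decode n : Option (OV N)).map
    (fold fatom fneg fand fex fbox)) (g := fun _ l => some (foldStep fatom fneg fand fex fbox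
      l.length l)) ?_ fun _ n => ?_).comp (Primrec.const ()) Primrec.id
  · exact (Primrec.option_some.comp (hstep.comp (Primrec.list_length.comp Primrec.snd)
      Primrec.snd)).to₂
  · rw [List.length_map, List.length_range, foldStep_map_range]

instance : Primcodable (OV N) where
  prim := by
    have h : Primrec fun n => (decode n : Option (OV N)).map Encodable.encode := by
      rw [← fold_encode]
      exact primrec_decode_map_fold (Primrec₂.natPair.comp (.const 0) .id)
        (Primrec₂.natPair.comp (.const 1) .id)
        (Primrec₂.natPair.comp (.const 2) (Primrec₂.natPair.comp .fst .snd)).to₂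
        (Primrec₂.natPair.comp (.const 3) .id)
        (Primrec₂.natPair.comp (.const 4)
          (Primrec₂.natPair.comp (Primrec.encode.comp .fst) .snd)).to₂
    refine Primrec.nat_iff.1 ((Primrec.encode_iff.2 h).of_eq fun n => ?_)
    change _ = Encodable.encode (decode n)
    cases (decode n : Option (OV N)) <;> rfl

theorem primrec_atom : Primrec (atom : ℕ → OV N) :=
  Primrec.encode_iff.1 (Primrec₂.natPair.comp (.const 0) .id)

theorem primrec_neg : Primrec (neg : OV N → OV N) :=
  Primrec.encode_iff.1 (Primrec₂.natPair.comp (.const 1) .encode)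

theorem primrec_and : Primrec₂ (and : OV N → OV N → OV N) :=
  Primrec.encode_iff.1 (Primrec₂.natPair.comp (.const 2)
    (Primrec₂.natPair.comp (Primrec.encode.comp .fst) (Primrec.encode.comp .snd)))

theorem primrec_ex : Primrec (ex : OV N → OV N) :=
  Primrec.encode_iff.1 (Primrec₂.natPair.comp (.const 3) .encode)

theorem primrec_box : Primrec₂ (box : N → OV N → OV N) :=
  Primrec.encode_iff.1 (Primrec₂.natPair.comp (.const 4)
    (Primrec₂.natPair.comp (Primrec.encode.comp .fst) (Primrec.encode.comp .snd)))

theorem primrec_imp : Primrec₂ (imp : OV N → OV N → OV N) :=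
  primrec_neg.comp₂ (primrec_and.comp₂ Primrec₂.left (primrec_neg.comp₂ Primrec₂.right))

theorem primrec_or : Primrec₂ (or : OV N → OV N → OV N) :=
  primrec_neg.comp₂ (primrec_and.comp₂ (primrec_neg.comp₂ Primrec₂.left)
    (primrec_neg.comp₂ Primrec₂.right))

theorem primrec_fold (hatom : Primrec fatom) (hneg : Primrec fneg)
    (hand : Primrec₂ fand) (hex : Primrec fex) (hbox : Primrec₂ fbox) :
    Primrec (fold fatom fneg fand fex fbox) := by
  refine Primrec.option_some_iff.1 ?_
  have := (primrec_decode_map_fold hatom hneg hand hex hbox).comp (Primrec.encode (α := OV N))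
  exact this.of_eq fun φ => by
    change (Encodable.decode (Encodable.encode φ)).map _ = _
    simp

theorem primrec_surrogate {M : Type} [Primcodable M] {p : N → Option M} (hp : Primrec p) :
    Primrec (surrogate p : OV N → OV M) := by
  let r : OV N → OV N × OV M :=
    fold (fun n => (atom n, atom (Encodable.encode (atom n : OV N))))
      (fun s => (neg s.1, neg s.2)) (fun s t => (and s.1 t.1, and s.2 t.2))
      (fun s => (ex s.1, ex s.2))
      (fun m s => (box m s.1, (p m).elim (atom (Encodable.encode (box m s.1))) (box · s.2)))
  have hr : Primrec r := by
    refine primrec_fold (primrec_atom.pair (primrec_atom.comp (Primrec.encode.comp primrec_atom)))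
      ((primrec_neg.comp .fst).pair (primrec_neg.comp .snd)) ?_
      ((primrec_ex.comp .fst).pair (primrec_ex.comp .snd)) ?_
    · exact ((primrec_and.comp (Primrec.fst.comp .fst) (Primrec.fst.comp .snd)).pair
        (primrec_and.comp (Primrec.snd.comp .fst) (Primrec.snd.comp .snd))).to₂
    · have hbox : Primrec fun x : N × OV N × OV M => box x.1 x.2.1 :=
        primrec_box.comp .fst (Primrec.fst.comp .snd)
      have helim : Primrec fun x : N × OV N × OV M =>
          (p x.1).elim (atom (Encodable.encode (box x.1 x.2.1))) (box · x.2.2) :=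
        (Primrec.option_casesOn (hp.comp .fst) (primrec_atom.comp (Primrec.encode.comp hbox))
          (primrec_box.comp₂ Primrec₂.right ((Primrec.snd.comp .snd).comp₂ Primrec₂.left))).of_eq
          fun x => by cases p x.1 <;> rfl
      exact (hbox.pair helim).to₂
  have hr_eq (φ : OV N) : r φ = (φ, φ.surrogate p) := by
    induction φ with
    | _ => simp_all [r, fold, surrogate]
  exact (Primrec.snd.comp hr).of_eq fun φ => by rw [hr_eq]

end Fold

end OV

/-! ### Decidability -/

theorem primrecPred_mem_of_finite {α : Type*} [Primcodable α] {s : Set α} (hs : s.Finite) :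
    PrimrecPred (· ∈ s) :=
  (PrimrecRel.exists_mem_list Primrec.eq).comp
    (Primrec.const hs.toFinset.toList) Primrec.id |>.of_eq fun a => by simp

theorem exists_primcodable_encode_eq {M : Type*} [Finite M] {e : M → ℕ}
    (he : Function.Injective e) : ∃ _ : Primcodable M, Encodable.encode = e := by
  classical
  let := Primcodable.subtype (primrecPred_mem_of_finite (Set.finite_range e))
  exact ⟨Primcodable.ofEquiv {n // n ∈ Set.range e} (Equiv.ofInjective e he), rfl⟩

theorem computable_list_filter {α β : Type*} [Primcodable α] [Primcodable β] {f : α → List β}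
    {p : α → β → Bool} (hf : Computable f) (hp : Computable₂ p) :
    Computable fun a => (f a).filter (p a) := by
  have hget : Computable fun x : α × ℕ × List β => (f x.1)[x.2.1]? :=
    Computable.list_getElem?.comp (hf.comp .fst) (Computable.fst.comp .snd)
  have hcond : Computable₂ fun (x : α × ℕ × List β) b => bif p x.1 b then [b] else [] :=
    Computable.cond (hp.comp (Computable.fst.comp .fst) .snd)
      (Computable.list_cons.comp .snd (.const [])) (.const [])
  have hstep : Computable₂ fun (a : α) (s : ℕ × List β) =>
      s.2 ++ (f a)[s.1]?.toList.filter (p a) :=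
    Computable.list_append.comp (Computable.snd.comp .snd)
      ((hget.option_casesOn (.const []) hcond).of_eq fun x => by
        cases (f x.1)[x.2.1]? <;> simp [List.filter_singleton, Bool.cond_eq_ite])
  refine (Computable.nat_rec (Computable.list_length.comp hf) (.const []) hstep).of_eq fun a => ?_
  suffices h : ∀ k, Nat.rec (motive := fun _ => List β) []
      (fun i s => s ++ (f a)[i]?.toList.filter (p a)) k = ((f a).take k).filter (p a) by
    rw [h, List.take_length]
  intro k
  induction k with
  | zero => rfl
  | succ k ih => rw [List.take_add_one, List.filter_append, ← ih]

theorem decidableLogic_encode_iff {M : Type} [Primcodable M] {L : Set (OV M)} :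
    DecidableLogic Encodable.encode L ↔ ComputablePred (· ∈ L) := by
  refine ⟨fun h => ?_, fun h => ?_⟩
  · refine ComputablePred.computable_of_manyOneReducible ⟨_, Computable.encode, fun φ => ?_⟩ h
    exact ⟨fun hφ => ⟨φ, hφ, rfl⟩, fun ⟨ψ, hψ, he⟩ => Encodable.encode_injective (a₁ := ψ) he ▸ hψ⟩
  · obtain ⟨f, hf, hLf⟩ := ComputablePred.computable_iff.1 h
    refine ComputablePred.computable_iff.2
      ⟨fun n => ((Encodable.decode₂ (OV M) n).map f).getD false, ?_, ?_⟩
    · exact Computable.option_getD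
        (Computable.option_map Primrec.decode₂.to_comp (hf.comp .snd).to₂) (.const false)
    · funext n
      have hL (φ : OV M) : φ ∈ L ↔ f φ = true := iff_of_eq (congrFun hLf φ)
      change (∃ φ ∈ L, Encodable.encode φ = n) = _
      simp_rw [← Encodable.decode₂_eq_some, hL]
      cases Encodable.decode₂ (OV M) n <;> simp

namespace OV

variable {N : Type} [Primcodable N]

theorem primrec_descriptions : Primrec (descriptions : List (OV N) → List (OV N)) := by
  have hφ : Primrec fun x : (List (OV N) × OV N × List (OV N)) × OV N => x.1.2.1 :=
    Primrec.fst.comp (Primrec.snd.comp .fst)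
  have hds : Primrec fun x : List (OV N) × OV N × List (OV N) => x.2.2 := Primrec.snd.comp .snd
  have hstep : Primrec₂ fun (_ : List (OV N)) (s : OV N × List (OV N)) =>
      s.2.map (and s.1) ++ s.2.map (and (neg s.1)) :=
    (Primrec.list_append.comp (Primrec.list_map hds (primrec_and.comp hφ .snd).to₂)
      (Primrec.list_map hds (primrec_and.comp (primrec_neg.comp hφ) .snd).to₂)).to₂
  exact Primrec.list_foldr .id (.const [top]) hstep

theorem primrec_quasiDescriptions : Primrec (quasiDescriptions : ℕ → List (OV N)) :=
  primrec_descriptions.comp (Primrec.list_map (primrec_descriptions.comp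
    (Primrec.listFilterMap .list_range (Primrec.decode.comp .snd).to₂)) (primrec_ex.comp .snd).to₂)

theorem primrec_disj : Primrec (disj : List (OV N) → OV N) :=
  Primrec.list_foldr .id (Primrec.const (neg (top : OV N))) (primrec_or.comp (Primrec.fst.comp .snd)
    (Primrec.snd.comp .snd)).to₂

theorem primrec_boxes (ops : List N) : Primrec (boxes ops) :=
  Primrec.list_foldr (Primrec.const ops) (Primrec.const (top : OV N))
    (primrec_and.comp (primrec_box.comp (Primrec.fst.comp .snd) .fst)
      (Primrec.snd.comp .snd)).to₂

end OV

section Theta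

open OV

variable {N : Type} [Primcodable N] {Λ : Bool → Set (OV N)}

theorem computablePred_admissible {α : Type*} [Primcodable α] {χ : α → Bool → OV N} {q : α → OV N}
    (hΛ : ∀ i, ComputablePred (· ∈ Λ i)) (hχ : ∀ i, Computable (χ · i)) (hq : Computable q) :
    ComputablePred fun a => Admissible Λ (χ a) (q a) := by
  have hand (i : Bool) : Computable fun a => neg (and (q a) (χ a i)) :=
    primrec_neg.to_comp.comp (primrec_and.to_comp.comp hq (hχ i))
  choose p hp hΛp using fun i => ComputablePred.computable_iff.1 (hΛ i)
  refine ComputablePred.computable_iff.2 ⟨fun a =>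
    !(p false (neg (and (q a) (χ a false)))) && !(p true (neg (and (q a) (χ a true)))), ?_, ?_⟩
  · exact Primrec.and.to_comp.comp (Primrec.not.to_comp.comp ((hp false).comp (hand false)))
      (Primrec.not.to_comp.comp ((hp true).comp (hand true)))
  · have hmem i φ : φ ∈ Λ i ↔ p i φ = true := iff_of_eq (congrFun (hΛp i) φ)
    simp [Admissible, hmem]

theorem computable_theta (hΛ : ∀ i, ComputablePred (· ∈ Λ i)) (ops : Bool → List N) :
    ∀ i, Computable (theta Λ ops · i) := by
  classical
  let χ : OV N × OV N → Bool → OV N := fun s i => boxes (ops i) (bif i then s.2 else s.1)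
  have hχ : ∀ i, Computable (χ · i)
    | false => (primrec_boxes (ops false)).to_comp.comp Computable.fst
    | true => (primrec_boxes (ops true)).to_comp.comp Computable.snd
  let δ : ℕ × OV N × OV N → OV N := fun s => disj ((quasiDescriptions (s.1 + 1)).filter
    (Admissible Λ (χ s.2)))
  have hadm : Computable₂ fun (s : ℕ × OV N × OV N) (q : OV N) =>
      decide (Admissible Λ (χ s.2) q) :=
    (computablePred_admissible hΛ (fun i => (hχ i).comp (Computable.snd.comp .fst)) .snd).decide
  have hδ : Computable δ := primrec_disj.to_comp.comp
    (computable_list_filter (primrec_quasiDescriptions.to_comp.comp (Computable.succ.comp .fst))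
      hadm)
  have hcomp (i : Bool) : Computable fun s : ℕ × OV N × OV N => and (δ s) (χ s.2 i) :=
    primrec_and.to_comp.comp hδ ((hχ i).comp .snd)
  have hstep : Computable₂ fun (_ : ℕ) (s : ℕ × OV N × OV N) =>
      (and (δ s) (χ s.2 false), and (δ s) (χ s.2 true)) :=
    ((hcomp false).pair (hcomp true)).comp .snd
  have hpair : Computable fun l => (theta Λ ops l false, theta Λ ops l true) := by
    refine (Computable.nat_rec Computable.id (.const (top, top)) hstep).of_eq fun l => ?_
    induction l with
    | zero => rfl
    | succ l ih =>
      have hχ_eq : χ (theta Λ ops l false, theta Λ ops l true) =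
          fun j => boxes (ops j) (theta Λ ops l j) := by
        funext j
        cases j <;> rfl
      simp only [id] at ih ⊢
      simp only [ih, δ, hχ_eq, theta]
  rintro (_ | _)
  · exact Computable.fst.comp hpair
  · exact Computable.snd.comp hpair

end Theta

open OV in
theorem computablePred_componentLogic {M1 M2 : Type} [Primcodable M1] [Primcodable M2]
    {L1 : Set (OV M1)} {L2 : Set (OV M2)} (hL1 : ComputablePred (· ∈ L1))
    (hL2 : ComputablePred (· ∈ L2)) : ∀ i, ComputablePred (· ∈ componentLogic L1 L2 i) := by
  have hleft : Primrec (Sum.getLeft? : M1 ⊕ M2 → Option M1) :=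
    (Primrec.sumCasesOn .id (Primrec.option_some.comp .snd).to₂ (.const none)).of_eq fun m => by
      cases m <;> rfl
  have hright : Primrec (Sum.getRight? : M1 ⊕ M2 → Option M2) :=
    (Primrec.sumCasesOn .id (.const none) (Primrec.option_some.comp .snd).to₂).of_eq fun m => by
      cases m <;> rfl
  rintro (_ | _)
  · exact ComputablePred.computable_of_manyOneReducible
      ⟨_, (primrec_surrogate hleft).to_comp, fun _ => .rfl⟩ hL1
  · exact ComputablePred.computable_of_manyOneReducible
      ⟨_, (primrec_surrogate hright).to_comp, fun _ => .rfl⟩ hL2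

open OV in
theorem computablePred_mem_fusion_logD {M1 M2 : Type} [Finite M1] [Finite M2] [Primcodable M1]
    [Primcodable M2] {d : DSem} {C1 : Set (KFrame M1)} {C2 : Set (KFrame M2)}
    (hC1 : C1.Nonempty) (hC2 : C2.Nonempty) (hdu1 : ClosedDU C1) (hdu2 : ClosedDU C2)
    (hL1 : ComputablePred (· ∈ LogD d C1)) (hL2 : ComputablePred (· ∈ LogD d C2)) :
    ComputablePred (· ∈ fusion (LogD d C1) (LogD d C2)) := by
  have hΛ := computablePred_componentLogic hL1 hL2
  refine ComputablePred.computable_of_manyOneReducible ⟨_, ?_, fun φ =>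
    mem_fusion_logD_iff hC1 hC2 hdu1 hdu2 φ⟩ (hΛ false)
  exact primrec_imp.to_comp.comp ((computable_theta hΛ _ false).comp
    (Computable.succ.comp .encode)) .id

/-- Transfer of decidability under fusion of one-variable
modal logics that are `d`-complete for classes of frames closed under disjoint
unions.  Decidability is taken w.r.t. the fixed Gödel numbering `OV.encode`,
relative to injective numberings of the (disjoint) modal signatures. -/
theorem fusion_decidable {M1 M2 : Type} [Finite M1] [Finite M2] (d : DSem)
    (e1 : M1 → ℕ) (e2 : M2 → ℕ)
    (he1 : Function.Injective e1) (he2 : Function.Injective e2)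
    (C1 : Set (KFrame M1)) (C2 : Set (KFrame M2))
    (hC1 : C1.Nonempty) (hC2 : C2.Nonempty)
    (hdu1 : ClosedDU C1) (hdu2 : ClosedDU C2)
    (L1 : Set (OV M1)) (L2 : Set (OV M2))
    (hL1 : IsOVLogic L1) (hL2 : IsOVLogic L2)
    (hc1 : DComplete d L1 C1) (hc2 : DComplete d L2 C2)
    (hd1 : DecidableLogic e1 L1) (hd2 : DecidableLogic e2 L2) :
    DecidableLogic (Sum.elim (fun m => 2 * e1 m) (fun m => 2 * e2 m + 1))
      (fusion L1 L2) := by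
  obtain ⟨_, rfl⟩ := exists_primcodable_encode_eq he1
  obtain ⟨_, rfl⟩ := exists_primcodable_encode_eq he2
  obtain rfl : L1 = LogD d C1 := hc1
  obtain rfl : L2 = LogD d C2 := hc2
  have hencode : Sum.elim (fun m : M1 => 2 * Encodable.encode m)
      (fun m : M2 => 2 * Encodable.encode m + 1) = Encodable.encode := by
    funext m
    cases m <;> rfl
  rw [decidableLogic_encode_iff] at hd1 hd2
  rw [hencode, decidableLogic_encode_iff]
  exact computablePred_mem_fusion_logD hC1 hC2 hdu1 hdu2 hd1 hd2

end OneVarML
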